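/- Let q = p^f be a power of a prime p, let 2m ≥ 4 and suppose GSp_{2m}(q) is not solvable. Let π be a set of primes with 2 ∉ π and p ∉ π such that |π ∩ π(GSp_{2m}(q))| ≥ 2, and suppose GSp_{2m}(q) has a Hall π-subgroup H. Set G = H·Sp_{2m}(q). Then there exist x, y, z ∈ G such that H ∩ H^x ∩ H^y ∩ H^z is contained in the center Z(GSp_{2m}(q)), i.e. consists of scalar matrices. -/

import Mathlib

open Matrix Pointwise

/-- `H^x = x⁻¹ H x`. -/
def conjBy {G : Type*} [Group G] (H : Subgroup G) (x : G) : Subgroup G :=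
  Subgroup.map ((MulAut.conj x⁻¹).toMonoidHom) H

/-- Hall π-subgroup of the whole group. -/
def IsHallSubgroup {G : Type*} [Group G] (π : Set ℕ) (H : Subgroup G) : Prop :=
  (∀ r : ℕ, r.Prime → r ∣ Nat.card H → r ∈ π) ∧ ∀ r ∈ π, ¬ r ∣ H.index

/-- Hall π-subgroup of the subgroup `K`. -/
def IsHallSubgroupIn {G : Type*} [Group G] (π : Set ℕ) (K H : Subgroup G) : Prop :=
  H ≤ K ∧ (∀ r : ℕ, r.Prime → r ∣ Nat.card H → r ∈ π) ∧ ∀ r ∈ π, ¬ r ∣ H.relIndex K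

/-- The subgroup `SL_n` of `GL_n`. -/
def SLsub (n : ℕ) (F : Type*) [Field F] : Subgroup (GL (Fin n) F) where
  carrier := {g | Matrix.det (g : Matrix (Fin n) (Fin n) F) = 1}
  one_mem' := by simp
  mul_mem' := by
    intro a b ha hb
    simp only [Set.mem_setOf_eq, Units.val_mul, Matrix.det_mul] at *
    rw [ha, hb, one_mul]
  inv_mem' := by
    intro g hg
    simp only [Set.mem_setOf_eq] at *
    have h1 : ((g⁻¹ : GL (Fin n) F) : Matrix (Fin n) (Fin n) F) *
        (g : Matrix (Fin n) (Fin n) F) = 1 := g.inv_mul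
    have := congrArg Matrix.det h1
    rw [Matrix.det_mul, Matrix.det_one, hg, mul_one] at this
    exact this

/-- The group of similitudes of the bilinear form `B` (acting on row vectors). -/
def similitudeGroup {n : ℕ} {F : Type*} [Field F]
    (B : (Fin n → F) → (Fin n → F) → F) : Subgroup (GL (Fin n) F) where
  carrier := {g | ∃ c : Fˣ, ∀ u v : Fin n → F,
    B (Matrix.vecMul u (g : Matrix (Fin n) (Fin n) F))
      (Matrix.vecMul v (g : Matrix (Fin n) (Fin n) F)) = (c : F) * B u v}
  one_mem' := ⟨1, by simp⟩
  mul_mem' := by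
    rintro a b ⟨c, hc⟩ ⟨d, hd⟩
    refine ⟨c * d, fun u v => ?_⟩
    simp only [Units.val_mul, ← Matrix.vecMul_vecMul, hd, hc]
    ring
  inv_mem' := by
    rintro g ⟨c, hc⟩
    refine ⟨c⁻¹, fun u v => ?_⟩
    have h1 : ∀ w : Fin n → F, Matrix.vecMul
        (Matrix.vecMul w ((g⁻¹ : GL (Fin n) F) : Matrix (Fin n) (Fin n) F))
        (g : Matrix (Fin n) (Fin n) F) = w := by
      intro w
      rw [Matrix.vecMul_vecMul, g.inv_mul, Matrix.vecMul_one]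
    have h2 := hc (Matrix.vecMul u ((g⁻¹ : GL (Fin n) F) : Matrix (Fin n) (Fin n) F))
      (Matrix.vecMul v ((g⁻¹ : GL (Fin n) F) : Matrix (Fin n) (Fin n) F))
    rw [h1, h1] at h2
    rw [h2, Units.val_inv_eq_inv_val, inv_mul_cancel_left₀ (by exact_mod_cast c.ne_zero)]

/-- The isometry group of the bilinear form `B` (acting on row vectors). -/
def isometryGroup {n : ℕ} {F : Type*} [Field F]
    (B : (Fin n → F) → (Fin n → F) → F) : Subgroup (GL (Fin n) F) where
  carrier := {g | ∀ u v : Fin n → F,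
    B (Matrix.vecMul u (g : Matrix (Fin n) (Fin n) F))
      (Matrix.vecMul v (g : Matrix (Fin n) (Fin n) F)) = B u v}
  one_mem' := by simp
  mul_mem' := by
    intro a b ha hb u v
    simp only [Set.mem_setOf_eq] at ha hb
    simp only [Units.val_mul, ← Matrix.vecMul_vecMul]
    rw [hb, ha]
  inv_mem' := by
    intro g hg u v
    have h1 : ∀ w : Fin n → F, Matrix.vecMul
        (Matrix.vecMul w ((g⁻¹ : GL (Fin n) F) : Matrix (Fin n) (Fin n) F))
        (g : Matrix (Fin n) (Fin n) F) = w := by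
      intro w
      rw [Matrix.vecMul_vecMul, g.inv_mul, Matrix.vecMul_one]
    have h2 := hg (Matrix.vecMul u ((g⁻¹ : GL (Fin n) F) : Matrix (Fin n) (Fin n) F))
      (Matrix.vecMul v ((g⁻¹ : GL (Fin n) F) : Matrix (Fin n) (Fin n) F))
    rw [h1, h1] at h2
    exact h2.symm

/-- The group of similitudes of the quadratic form `Q` (acting on row vectors). -/
def qSimilitudeGroup {n : ℕ} {F : Type*} [Field F]
    (Q : (Fin n → F) → F) : Subgroup (GL (Fin n) F) where
  carrier := {g | ∃ c : Fˣ, ∀ v : Fin n → F,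
    Q (Matrix.vecMul v (g : Matrix (Fin n) (Fin n) F)) = (c : F) * Q v}
  one_mem' := ⟨1, by simp⟩
  mul_mem' := by
    rintro a b ⟨c, hc⟩ ⟨d, hd⟩
    refine ⟨c * d, fun v => ?_⟩
    simp only [Units.val_mul, ← Matrix.vecMul_vecMul, hd, hc]
    ring
  inv_mem' := by
    rintro g ⟨c, hc⟩
    refine ⟨c⁻¹, fun v => ?_⟩
    have h1 : ∀ w : Fin n → F, Matrix.vecMul
        (Matrix.vecMul w ((g⁻¹ : GL (Fin n) F) : Matrix (Fin n) (Fin n) F))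
        (g : Matrix (Fin n) (Fin n) F) = w := by
      intro w
      rw [Matrix.vecMul_vecMul, g.inv_mul, Matrix.vecMul_one]
    have h2 := hc (Matrix.vecMul v ((g⁻¹ : GL (Fin n) F) : Matrix (Fin n) (Fin n) F))
    rw [h1] at h2
    rw [h2, Units.val_inv_eq_inv_val, inv_mul_cancel_left₀ (by exact_mod_cast c.ne_zero)]

/-- The unitary group `GU_n` with respect to the field automorphism `φ`. -/
def GUgrp (n : ℕ) {K : Type*} [Field K] (φ : K →+* K) : Subgroup (GL (Fin n) K) where
  carrier := {g | ((g : Matrix (Fin n) (Fin n) K).map φ)ᵀ * (g : Matrix (Fin n) (Fin n) K) = 1}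
  one_mem' := by
    simp [Matrix.map_one φ φ.map_zero φ.map_one]
  mul_mem' := by
    intro a b ha hb
    simp only [Set.mem_setOf_eq, Units.val_mul, Matrix.map_mul, Matrix.transpose_mul] at *
    calc ((b : Matrix (Fin n) (Fin n) K).map φ)ᵀ * ((a : Matrix (Fin n) (Fin n) K).map φ)ᵀ *
          ((a : Matrix (Fin n) (Fin n) K) * (b : Matrix (Fin n) (Fin n) K))
        = ((b : Matrix (Fin n) (Fin n) K).map φ)ᵀ *
          (((a : Matrix (Fin n) (Fin n) K).map φ)ᵀ * (a : Matrix (Fin n) (Fin n) K)) *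
          (b : Matrix (Fin n) (Fin n) K) := by noncomm_ring
      _ = 1 := by rw [ha, mul_one, hb]
  inv_mem' := by
    intro g hg
    simp only [Set.mem_setOf_eq] at *
    have hcomm : (g : Matrix (Fin n) (Fin n) K) * ((g : Matrix (Fin n) (Fin n) K).map φ)ᵀ = 1 :=
      mul_eq_one_comm.mp hg
    have h1 : ((g : Matrix (Fin n) (Fin n) K) * ((g⁻¹ : GL (Fin n) K) : Matrix (Fin n) (Fin n) K)).map φ = 1 := by
      rw [g.mul_inv]
      exact Matrix.map_one φ φ.map_zero φ.map_one
    rw [Matrix.map_mul] at h1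
    have h2 := congrArg Matrix.transpose h1
    rw [Matrix.transpose_mul, Matrix.transpose_one] at h2
    calc (((g⁻¹ : GL (Fin n) K) : Matrix (Fin n) (Fin n) K).map φ)ᵀ *
          ((g⁻¹ : GL (Fin n) K) : Matrix (Fin n) (Fin n) K)
        = (((g⁻¹ : GL (Fin n) K) : Matrix (Fin n) (Fin n) K).map φ)ᵀ *
          (((g : Matrix (Fin n) (Fin n) K).map φ)ᵀ * (g : Matrix (Fin n) (Fin n) K)) *
          ((g⁻¹ : GL (Fin n) K) : Matrix (Fin n) (Fin n) K) := by rw [hg, mul_one]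
      _ = ((((g⁻¹ : GL (Fin n) K) : Matrix (Fin n) (Fin n) K).map φ)ᵀ *
          ((g : Matrix (Fin n) (Fin n) K).map φ)ᵀ) *
          ((g : Matrix (Fin n) (Fin n) K) * ((g⁻¹ : GL (Fin n) K) : Matrix (Fin n) (Fin n) K)) := by
            noncomm_ring
      _ = 1 := by rw [h2, g.mul_inv, mul_one]



section
variable {F V : Type*} [Field F] [AddCommGroup V] [Module F V]
open Polynomial

lemma alt_antisymm (B : LinearMap.BilinForm F V) (halt : ∀ v, B v v = 0) (u v : V) :
    B u v = - B v u := by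
  have := halt (u + v)
  simp only [map_add, LinearMap.add_apply, halt, zero_add, add_zero] at this
  exact eq_neg_of_add_eq_zero_right this

/-- predicate for partial isotropic subspaces -/
def PartIso (B : LinearMap.BilinForm F V) (e : V →ₗ[F] V) (W A : Submodule F V) : Prop :=
  A ≤ W ∧ (∀ a ∈ A, e a - e (e a) ∈ A) ∧ (∀ a ∈ A, ∀ b ∈ A, B a b = 0) ∧
  (∀ a ∈ A, (∀ b ∈ A, B (e a) b = 0) → a = 0) ∧ (A = ⊥ ∨ ∃ a ∈ A, B (e a) a ≠ 0)

lemma step_two [FiniteDimensional F V] (B : LinearMap.BilinForm F V) (halt : ∀ v, B v v = 0)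
    (W : Submodule F V) (hW : ∀ v ∈ W, (∀ w ∈ W, B v w = 0) → v = 0)
    (e : V →ₗ[F] V) (he : ∀ v ∈ W, e v ∈ W)
    (hadj : ∀ v ∈ W, ∀ w ∈ W, B (e v) w + B v (e w) = B v w)
    (h2 : ∀ v ∈ W, e v + e v = v → v = 0)
    (hfld : ∀ q : F[X], (∀ v ∈ W, aeval (e - e * e : Module.End F V) q v = 0) ∨
      (∀ v ∈ W, aeval (e - e * e : Module.End F V) q v = 0 → v = 0)) :
    ∃ A ≤ W, (∀ a ∈ A, ∀ b ∈ A, B a b = 0) ∧ (∀ a ∈ A, ∀ b ∈ A, B (e a) b = B (e b) a) ∧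
      (∀ a ∈ A, ∀ b ∈ A, B (e (e a)) b = B (e a) b) ∧
      (∀ a ∈ A, (∀ b ∈ A, B (e a) b = 0) → a = 0) ∧ W ≤ A ⊔ A.map e ∧
      (A = ⊥ ∨ ∃ a ∈ A, B (e a) a ≠ 0) := by
  have hanti := alt_antisymm B halt
  set ν : Module.End F V := e - e * e with hν
  have hνa : ∀ v, ν v = e v - e (e v) := fun v => rfl
  have hκW : ∀ (q : F[X]) (T : Submodule F V), (∀ v ∈ T, ν v ∈ T) → ∀ v ∈ T, aeval ν q v ∈ T := by
    intro q T hT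
    induction q using Polynomial.induction_on' with
    | add p q hp hq => intro v hv; simpa using T.add_mem (hp v hv) (hq v hv)
    | monomial n c =>
      intro v hv
      rw [aeval_monomial]
      have : ∀ n, (ν ^ n) v ∈ T := by
        intro n
        induction n with
        | zero => simpa
        | succ n ih => rw [pow_succ']; exact hT _ ih
      exact T.smul_mem c (this n)
  have hνW : ∀ v ∈ W, ν v ∈ W := fun v hv => W.sub_mem (he v hv) (he _ (he v hv))
  have hνsa : ∀ v ∈ W, ∀ w ∈ W, B (ν v) w = B v (ν w) := by
    intro v hv w hw
    have h1 := hadj _ (he v hv) w hw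
    have h2 := hadj v hv _ (he w hw)
    simp only [hνa, map_sub, LinearMap.sub_apply]
    linear_combination h2 - h1
  have hκsa : ∀ q : F[X], ∀ v ∈ W, ∀ w ∈ W, B (aeval ν q v) w = B v (aeval ν q w) := by
    intro q
    induction q using Polynomial.induction_on' with
    | add p q hp hq => intro v hv w hw; simp [hp v hv w hw, hq v hv w hw]
    | monomial n c =>
      intro v hv w hw
      have : ∀ n, ∀ v ∈ W, B ((ν ^ n) v) w = B v ((ν ^ n) w) := by
        intro n
        induction n with
        | zero => simp
        | succ n ih =>
          intro v hv
          rw [pow_succ, Module.End.mul_apply, ih _ (hνW v hv)]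
          have : (ν ^ n) w ∈ W := by
            have := hκW (X ^ n) W hνW w hw
            simpa using this
          rw [hνsa v hv _ this, ← Module.End.mul_apply, ← pow_succ', ← pow_succ]
      simp [aeval_monomial, this n v hv]
  have hcomm : ∀ q : F[X], ∀ v, aeval ν q (e v) = e (aeval ν q v) := by
    intro q v
    have h1 : Commute (e : Module.End F V) ν := by
      rw [hν]; exact (Commute.refl _).sub_right ((Commute.refl _).mul_right (Commute.refl _))
    have h2 : Commute (aeval ν q) (e : Module.End F V) := by
      induction q using Polynomial.induction_on' with
      | add p q hp hq => rw [map_add]; exact hp.add_left hq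
      | monomial n c =>
        rw [aeval_monomial]
        exact (Algebra.commutes c _ : _ = _) |> fun h => (Commute.mul_left h (h1.symm.pow_left n))
    exact LinearMap.congr_fun h2 v
  have hκ0 : ∀ q : F[X], ∀ a ∈ W, B (aeval ν q a) a = 0 := by
    intro q a ha
    have h1 := hadj _ (hκW q W hνW a ha) a ha
    rw [← hcomm, hκsa q _ (he a ha) a ha, hanti (e a)] at h1
    rw [← h1]; ring
  obtain ⟨A, hA, hmax⟩ := exists_maximal_of_wellFoundedGT (PartIso B e W)
    ⟨⊥, bot_le, by simp, by simp, by simp, by simp⟩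
  obtain ⟨hAW, hAν, hAiso, hAn, hAex⟩ := hA
  set Y := A ⊔ A.map e with hY
  have hAY : A ≤ Y := le_sup_left
  have heAY : ∀ a ∈ A, e a ∈ Y := fun a ha => (le_sup_right : A.map e ≤ Y) ⟨a, ha, rfl⟩
  have hYe : ∀ y ∈ Y, e y ∈ Y := by
    intro y hy
    obtain ⟨a, ha, _, ⟨b, hb, rfl⟩, rfl⟩ := Submodule.mem_sup.1 hy
    rw [map_add]
    refine Y.add_mem (heAY a ha) ?_
    have : e (e b) = e b - (e b - e (e b)) := by abel
    rw [this]
    exact Y.sub_mem (heAY b hb) (hAY (hAν b hb))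
  have hYW : Y ≤ W := by
    refine sup_le hAW ?_
    rintro _ ⟨a, ha, rfl⟩
    exact he a (hAW ha)
  have hYdis : Disjoint Y (B.orthogonal Y) := by
    rw [Submodule.disjoint_def]
    intro y hy hy'
    rw [LinearMap.BilinForm.mem_orthogonal_iff] at hy'
    obtain ⟨a, ha, _, ⟨b, hb, rfl⟩, rfl⟩ := Submodule.mem_sup.1 hy
    have hb0 : b = 0 := by
      apply hAn b hb
      intro c hc
      have : B c (a + e b) = 0 := hy' c (hAY hc)
      rw [map_add, hAiso c hc a ha, zero_add] at this
      rw [hanti, this, neg_zero]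
    have ha0 : a = 0 := by
      apply hAn a ha
      intro c hc
      have : B (e c) (a + e b) = 0 := hy' _ (heAY c hc)
      rw [hb0, map_zero, add_zero] at this
      have h3 := hadj a (hAW ha) c (hAW hc)
      rw [hanti a (e c), this, hAiso a ha c hc] at h3
      simpa using h3
    simp [ha0, hb0]
  have hrefl : B.IsRefl := by
    intro u v h
    rw [hanti, h, neg_zero]
  have hcompl := (LinearMap.BilinForm.isCompl_orthogonal_iff_disjoint hrefl).2 hYdis
  set Z := W ⊓ B.orthogonal Y with hZ
  have hdec : ∀ w ∈ W, ∃ y ∈ Y, ∃ z ∈ Z, y + z = w := by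
    intro w hw
    have : w ∈ Y ⊔ B.orthogonal Y := by rw [hcompl.sup_eq_top]; trivial
    obtain ⟨y, hy, z, hz, rfl⟩ := Submodule.mem_sup.1 this
    refine ⟨y, hy, z, ⟨?_, hz⟩, rfl⟩
    have := W.sub_mem hw (hYW hy)
    simpa using this
  have hYZ : ∀ y ∈ Y, ∀ z ∈ Z, B y z = 0 := fun y hy z hz =>
    (LinearMap.BilinForm.mem_orthogonal_iff.1 hz.2) y hy
  have hZY : ∀ y ∈ Y, ∀ z ∈ Z, B z y = 0 := fun y hy z hz => by
    rw [hanti, hYZ y hy z hz, neg_zero]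
  have hZe : ∀ z ∈ Z, e z ∈ Z := by
    intro z hz
    refine ⟨he z hz.1, ?_⟩
    rw [SetLike.mem_coe, LinearMap.BilinForm.mem_orthogonal_iff]
    intro y hy
    have h1 := hadj y (hYW hy) z hz.1
    rw [hYZ _ (hYe y hy) z hz, hYZ y hy z hz, zero_add] at h1
    exact h1
  have hZn : ∀ z ∈ Z, (∀ w ∈ Z, B z w = 0) → z = 0 := by
    intro z hz h
    apply hW z hz.1
    intro w hw
    obtain ⟨y, hy, z', hz', rfl⟩ := hdec w hw
    rw [map_add, hZY y hy z hz, h z' hz', zero_add]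
  have hZbot : Z = ⊥ := by
    by_contra hne
    obtain ⟨b, hb, hb0⟩ := (Submodule.ne_bot_iff _).1 hne
    have hex : ∃ a ∈ Z, B (e a) a ≠ 0 := by
      by_contra hcon
      push Not at hcon
      apply hb0
      apply h2 b hb.1
      rw [← sub_eq_zero]
      apply hZn _ (Z.sub_mem (Z.add_mem (hZe b hb) (hZe b hb)) hb)
      intro a ha
      have h3 := hcon (a + b) (Z.add_mem ha hb)
      simp only [map_add, LinearMap.add_apply, hcon a ha, hcon b hb, zero_add, add_zero] at h3
      have h4 := hadj a ha.1 b hb.1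
      simp only [map_sub, map_add, LinearMap.add_apply, LinearMap.sub_apply]
      rw [hanti a (e b), hanti a b] at h4
      linear_combination h3 - h4
    obtain ⟨a, ha, haa⟩ := hex
    have hZν : ∀ z ∈ Z, ν z ∈ Z := fun z hz => Z.sub_mem (hZe z hz) (hZe _ (hZe z hz))
    set L : Submodule F V :=
      LinearMap.range ((LinearMap.applyₗ a) ∘ₗ (aeval (R := F) ν).toLinearMap) with hL
    have hLm : ∀ v, v ∈ L ↔ ∃ q : F[X], aeval ν q a = v := by
      intro v; rw [hL, LinearMap.mem_range]; rfl
    have hLZ : L ≤ Z := by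
      intro v hv
      obtain ⟨q, rfl⟩ := (hLm v).1 hv
      exact hκW q Z hZν a ha
    have haL : a ∈ L := (hLm a).2 ⟨1, by simp⟩
    have hLκ : ∀ q : F[X], ∀ v ∈ L, aeval ν q v ∈ L := by
      intro q v hv
      obtain ⟨r, rfl⟩ := (hLm v).1 hv
      exact (hLm _).2 ⟨q * r, by simp⟩
    have hLiso : ∀ u ∈ L, ∀ v ∈ L, B u v = 0 := by
      intro u hu v hv
      obtain ⟨q, rfl⟩ := (hLm u).1 hu
      obtain ⟨r, rfl⟩ := (hLm v).1 hv
      rw [← hκsa r _ (hLZ hu).1 a ha.1]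
      have := hκ0 (r * q) a ha.1
      simpa using this
    have hLn : ∀ u ∈ L, (∀ v ∈ L, B (e u) v = 0) → u = 0 := by
      intro u hu h
      obtain ⟨q, rfl⟩ := (hLm u).1 hu
      rcases hfld q with h0 | hinj
      · exact h0 a ha.1
      exfalso
      let f : L →ₗ[F] L := (aeval ν q).restrict (hLκ q)
      have hf : Function.Injective f := by
        rw [← LinearMap.ker_eq_bot, LinearMap.ker_eq_bot']
        intro m hm
        apply Subtype.ext
        apply hinj m (hLZ m.2).1
        exact congrArg Subtype.val hm
      obtain ⟨m, hm⟩ := LinearMap.surjective_of_injective hf ⟨a, haL⟩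
      have hm' : aeval ν q (m : V) = a := congrArg Subtype.val hm
      have h3 := h m m.2
      rw [← hcomm, hκsa q _ (hZe a ha).1 _ (hLZ m.2).1, hm'] at h3
      exact haa h3
    have hP : PartIso B e W (A ⊔ L) := by
      refine ⟨sup_le hAW (hLZ.trans inf_le_left), ?_, ?_, ?_, Or.inr ⟨a, ?_, haa⟩⟩
      · intro v hv
        obtain ⟨x, hx, l, hl, rfl⟩ := Submodule.mem_sup.1 hv
        have h3 : ν l ∈ L := by have := hLκ X l hl; simpa using this
        rw [hνa] at h3
        have : e (x + l) - e (e (x + l)) = (e x - e (e x)) + (e l - e (e l)) := by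
          simp only [map_add]; abel
        rw [this]
        exact Submodule.add_mem_sup (hAν x hx) h3
      · intro v hv w hw
        obtain ⟨x, hx, l, hl, rfl⟩ := Submodule.mem_sup.1 hv
        obtain ⟨x', hx', l', hl', rfl⟩ := Submodule.mem_sup.1 hw
        simp [hAiso x hx x' hx', hLiso l hl l' hl', hYZ x (hAY hx) l' (hLZ hl'),
          hZY x' (hAY hx') l (hLZ hl)]
      · intro v hv h
        obtain ⟨x, hx, l, hl, rfl⟩ := Submodule.mem_sup.1 hv
        have h5 : x = 0 := by
          apply hAn x hx
          intro b hb
          have := h b (le_sup_left (a := A) hb)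
          rw [map_add, map_add, LinearMap.add_apply, hZY b (hAY hb) _ (hZe l (hLZ hl)), add_zero] at this
          exact this
        have h6 : l = 0 := by
          apply hLn l hl
          intro b hb
          have := h b (le_sup_right (a := A) hb)
          rw [map_add, map_add, LinearMap.add_apply, hYZ _ (heAY x hx) b (hLZ hb), zero_add] at this
          exact this
        simp [h5, h6]
      · exact le_sup_right (a := A) haL
    have hle := hmax hP le_sup_left
    have haA : a ∈ A := hle (le_sup_right (a := A) haL)
    exact haa (hYZ _ (heAY a haA) a ha)
  have hWY : W ≤ Y := by
    intro w hw
    obtain ⟨y, hy, z, hz, rfl⟩ := hdec w hw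
    rw [hZbot, Submodule.mem_bot] at hz
    rw [hz, add_zero]; exact hy
  refine ⟨A, hAW, hAiso, ?_, ?_, hAn, hWY, hAex⟩
  · intro a ha b hb
    have h3 := hadj a (hAW ha) b (hAW hb)
    rw [hAiso a ha b hb, hanti a (e b)] at h3
    linear_combination h3
  · intro a ha b hb
    have h3 := hAiso _ (hAν a ha) b hb
    rw [map_sub, LinearMap.sub_apply] at h3
    linear_combination -h3
end

section
open Matrix

lemma trace_sandwich {F n : Type*} [Field F] [Fintype n] [DecidableEq n] (X Y : Matrix n n F)
    (T : Matrix n n F →ₗ[F] Matrix n n F) (hT : ∀ M, T M = X * Mᵀ * Y) :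
    LinearMap.trace F _ T = (X * Yᵀ).trace := by
  rw [LinearMap.trace_eq_matrix_trace F (Matrix.stdBasis F n n)]
  rw [Matrix.trace]
  simp only [Matrix.diag_apply, LinearMap.toMatrix_apply]
  rw [Fintype.sum_prod_type]
  simp only [Matrix.trace, Matrix.diag_apply, Matrix.mul_apply, Matrix.transpose_apply]
  refine Finset.sum_congr rfl fun i _ => Finset.sum_congr rfl fun j _ => ?_
  rw [Matrix.stdBasis_eq_single, hT]
  change (X * (Matrix.single i j (1:F))ᵀ * Y) i j = _
  simp [Matrix.mul_apply, Matrix.single_apply, Finset.sum_ite_eq, ite_and]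

lemma exists_trace_ne_zero (F K : Type*) [Field F] [Finite F] [Ring K] [Algebra F K] [Finite K]
    [Nontrivial K] (hcomm : ∀ a b : K, a * b = b * a)
    (hdom : ∀ a b : K, a * b = 0 → a = 0 ∨ b = 0) :
    ∃ a : K, LinearMap.trace F K (LinearMap.mulLeft F a) ≠ 0 := by
  let _ : CommRing K := { ‹Ring K› with mul_comm := hcomm }
  have : NoZeroDivisors K := ⟨fun {a b} h => hdom a b h⟩
  have : IsDomain K := NoZeroDivisors.to_isDomain K
  have hF : IsField K := Finite.isField_of_domain K
  let _ : Field K := hF.toField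
  by_contra hcon
  push Not at hcon
  apply Algebra.trace_ne_zero F K
  ext a
  exact hcon a

lemma lemT_matrix {F n G : Type*} [Field F] [Finite F] [Fintype n] [DecidableEq n] [Nonempty n]
    [Group G] [Fintype G] (hodd : Odd (Nat.card G)) (hG : ((Nat.card G : ℕ) : F) ≠ 0)
    (ρ : G →* Matrix n n F) (J J' : Matrix n n F) (hJ : J * J' = 1) (hJJ : J' * J = 1)
    (hJt : Jᵀ = -J) (hρ : ∀ g, (ρ g)ᵀ * J * ρ g = J) (hsum : ∑ g, ρ g = 0)
    (hdom : ∀ f : Matrix n n F, (∀ g, f * ρ g = ρ g * f) → f ≠ 0 → IsUnit f) :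
    ∃ S : Matrix n n F, S ≠ 0 ∧ (∀ g, S * ρ g = ρ g * S) ∧ Sᵀ * J = -(J * S) := by
  have hρi : ∀ g, ρ g * ρ g⁻¹ = 1 := fun g => by rw [← map_mul]; simp
  have hρi' : ∀ g, ρ g⁻¹ * ρ g = 1 := fun g => by rw [← map_mul]; simp
  have hρJ : ∀ g, (ρ g)ᵀ * J = J * ρ g⁻¹ := by
    intro g
    calc (ρ g)ᵀ * J = ((ρ g)ᵀ * J * ρ g) * ρ g⁻¹ := by rw [Matrix.mul_assoc, hρi, Matrix.mul_one]
      _ = _ := by rw [hρ]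
  have hJt' : J'ᵀ = -J' := by
    have h1 : J'ᵀ * Jᵀ = 1 := by rw [← Matrix.transpose_mul, hJ, Matrix.transpose_one]
    rw [hJt] at h1
    calc J'ᵀ = J'ᵀ * (J * J') := by rw [hJ, Matrix.mul_one]
      _ = -(J'ᵀ * (-J)) * J' := by simp [Matrix.mul_assoc]
      _ = -J' := by rw [h1]; simp
  have hstarcomm : ∀ f : Matrix n n F, (∀ g, f * ρ g = ρ g * f) →
      ∀ g, (J' * fᵀ * J) * ρ g = ρ g * (J' * fᵀ * J) := by
    intro f hf g
    have h1 : J * ρ g = (ρ g⁻¹)ᵀ * J := by rw [hρJ, inv_inv]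
    have h2 : ρ g * J' = J' * (ρ g⁻¹)ᵀ := by
      calc ρ g * J' = J' * (J * ρ g) * J' := by
            rw [← Matrix.mul_assoc J', hJJ, Matrix.one_mul]
        _ = _ := by rw [h1, Matrix.mul_assoc, Matrix.mul_assoc, hJ, Matrix.mul_one]
    have h3 : fᵀ * (ρ g⁻¹)ᵀ = (ρ g⁻¹)ᵀ * fᵀ := by
      rw [← Matrix.transpose_mul, ← Matrix.transpose_mul, hf]
    calc (J' * fᵀ * J) * ρ g = J' * (fᵀ * (J * ρ g)) := by simp only [Matrix.mul_assoc]
      _ = J' * ((fᵀ * (ρ g⁻¹)ᵀ) * J) := by rw [h1]; simp only [Matrix.mul_assoc]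
      _ = (J' * (ρ g⁻¹)ᵀ) * (fᵀ * J) := by rw [h3]; simp only [Matrix.mul_assoc]
      _ = _ := by rw [← h2]; simp only [Matrix.mul_assoc]
  by_contra hcon
  push Not at hcon
  have hself : ∀ f : Matrix n n F, (∀ g, f * ρ g = ρ g * f) → J' * fᵀ * J = f := by
    intro f hf
    by_contra hne
    refine hcon (f - J' * fᵀ * J) (sub_ne_zero.2 (Ne.symm hne)) ?_ ?_
    · intro g; rw [Matrix.sub_mul, Matrix.mul_sub, hf, hstarcomm f hf]
    · simp only [Matrix.transpose_sub, Matrix.transpose_mul, Matrix.transpose_transpose, hJt, hJt',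
        Matrix.sub_mul, Matrix.mul_sub]
      have h1 : J * (J' * fᵀ * J) = fᵀ * J := by
        rw [← Matrix.mul_assoc, ← Matrix.mul_assoc, hJ, Matrix.one_mul]
      have h2 : -J * (f * -J') * J = J * f := by
        simp only [Matrix.neg_mul, Matrix.mul_neg, neg_neg, Matrix.mul_assoc, hJJ, Matrix.mul_one]
      rw [h1, h2]; abel
  let R : Subalgebra F (Matrix n n F) := Subalgebra.centralizer F (Set.range ρ)
  have hRm : ∀ f, f ∈ R ↔ ∀ g, f * ρ g = ρ g * f := by
    intro f
    rw [Subalgebra.mem_centralizer_iff]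
    constructor
    · intro h g; exact (h _ ⟨g, rfl⟩).symm
    · rintro h _ ⟨g, rfl⟩; exact (h g).symm
  have hRcomm : ∀ a b : R, a * b = b * a := by
    intro a b
    apply Subtype.ext
    have ha := hself _ ((hRm _).1 a.2)
    have hb := hself _ ((hRm _).1 b.2)
    have hab := hself _ ((hRm _).1 (a * b).2)
    show (a : Matrix n n F) * (b : Matrix n n F) = (b : Matrix n n F) * (a : Matrix n n F)
    calc (a : Matrix n n F) * (b : Matrix n n F) = J' * ((a : Matrix n n F) * (b : Matrix n n F))ᵀ * J := hab.symm
      _ = J' * (b : Matrix n n F)ᵀ * (J * J') * (a : Matrix n n F)ᵀ * J := by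
          rw [hJ, Matrix.mul_one, Matrix.transpose_mul]; simp only [Matrix.mul_assoc]
      _ = (J' * (b : Matrix n n F)ᵀ * J) * (J' * (a : Matrix n n F)ᵀ * J) := by
          simp only [Matrix.mul_assoc]
      _ = _ := by rw [ha, hb]
  have hRdom : ∀ a b : R, a * b = 0 → a = 0 ∨ b = 0 := by
    intro a b hab
    by_cases h0 : a = 0
    · exact Or.inl h0
    right
    have hu := hdom a ((hRm _).1 a.2) (fun h => h0 (Subtype.ext h))
    apply Subtype.ext
    have h1 : (a : Matrix n n F) * b = 0 := congrArg Subtype.val hab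
    have := hu.mul_right_eq_zero.1 h1
    exact this
  have : Finite R := inferInstance
  have : Nontrivial R := inferInstance
  obtain ⟨a, ha⟩ := exists_trace_ne_zero F R hRcomm hRdom
  have haR := (hRm _).1 a.2
  -- the averaging operator
  let Tg : G → (Matrix n n F →ₗ[F] Matrix n n F) := fun g =>
    (LinearMap.mulRight F (J * ρ g⁻¹ * (a : Matrix n n F))) ∘ₗ
      (LinearMap.mulLeft F (ρ g * J')) ∘ₗ (Matrix.transposeLinearEquiv n n F F).toLinearMap
  have hTg : ∀ g M, Tg g M = (ρ g * J') * Mᵀ * (J * ρ g⁻¹ * (a : Matrix n n F)) := fun g M => rfl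
  let T := ∑ g, Tg g
  have hT : ∀ M, T M = (∑ g, ρ g * (J' * Mᵀ * J) * ρ g⁻¹) * (a : Matrix n n F) := by
    intro M
    rw [LinearMap.sum_apply, Finset.sum_mul]
    refine Finset.sum_congr rfl fun g _ => ?_
    rw [hTg]; simp only [Matrix.mul_assoc]
  have hTR : ∀ M, T M ∈ R := by
    intro M
    rw [hT]
    refine R.mul_mem ?_ a.2
    rw [hRm]
    intro g
    rw [Finset.sum_mul, Finset.mul_sum]
    refine Fintype.sum_equiv (Equiv.mulLeft g⁻¹) _ _ ?_
    intro h
    simp only [Equiv.coe_mulLeft, _root_.mul_inv_rev, inv_inv, map_mul]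
    have := hρi g
    calc ρ h * (J' * Mᵀ * J) * ρ h⁻¹ * ρ g
        = (ρ g * ρ g⁻¹) * (ρ h * (J' * Mᵀ * J) * ρ h⁻¹ * ρ g) := by rw [this, Matrix.one_mul]
      _ = _ := by simp only [Matrix.mul_assoc]
  have hTon : ∀ f : R, T f = (Nat.card G : F) • ((a : Matrix n n F) * f) := by
    intro f
    have hf := (hRm _).1 f.2
    rw [hT, hself _ hf]
    have : ∀ g ∈ (Finset.univ : Finset G), ρ g * (f : Matrix n n F) * ρ g⁻¹ = f := by
      intro g _
      rw [← hf, Matrix.mul_assoc, hρi, Matrix.mul_one]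
    rw [Finset.sum_congr rfl this, Finset.sum_const, Finset.card_univ, Nat.card_eq_fintype_card]
    have hc : (a : Matrix n n F) * f = f * a := congrArg Subtype.val (hRcomm a f)
    rw [hc, Nat.cast_smul_eq_nsmul, smul_mul_assoc]
  have htr : LinearMap.trace F _ T = 0 := by
    rw [map_sum]
    have h1 : ∀ g ∈ (Finset.univ : Finset G), LinearMap.trace F _ (Tg g) =
        - (ρ (g ^ 2) * (a : Matrix n n F)).trace := by
      intro g _
      rw [trace_sandwich _ _ (Tg g) (hTg g), ← Matrix.trace_neg]
      have has := hself _ haR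
      have h3 : (ρ g⁻¹)ᵀ * J = J * ρ g := by rw [hρJ, inv_inv]
      congr 1
      calc ρ g * J' * (J * ρ g⁻¹ * (a : Matrix n n F))ᵀ
          = -(ρ g * J' * (a : Matrix n n F)ᵀ * ((ρ g⁻¹)ᵀ * J)) := by
            simp only [Matrix.transpose_mul, hJt, Matrix.mul_neg, Matrix.mul_assoc]
        _ = -(ρ g * (J' * (a : Matrix n n F)ᵀ * J) * ρ g) := by
            rw [h3]; simp only [Matrix.mul_assoc]
        _ = -(ρ (g^2) * (a : Matrix n n F)) := by
            rw [has, Matrix.mul_assoc, haR, ← Matrix.mul_assoc, pow_two, map_mul]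
    rw [Finset.sum_congr rfl h1, Finset.sum_neg_distrib, ← Matrix.trace_sum, ← Finset.sum_mul]
    have hcop : (Nat.card G).Coprime 2 := hodd.coprime_two_right
    have h2 : ∑ g, ρ (g ^ 2) = ∑ g, ρ g :=
      Fintype.sum_equiv (powCoprime hcop) _ _ (fun g => by simp)
    rw [h2, hsum]; simp
  have hres := LinearMap.trace_restrict_eq_of_forall_mem (Subalgebra.toSubmodule R) T hTR
  rw [htr] at hres
  have heq : T.restrict (p := Subalgebra.toSubmodule R) (q := Subalgebra.toSubmodule R) (fun M _ => hTR M) =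
      (Nat.card G : F) • (LinearMap.mulLeft F a : R →ₗ[F] R) := by
    ext1 f
    apply Subtype.ext
    exact hTon f
  have heq2 : LinearMap.trace F R ((Nat.card G : F) • (LinearMap.mulLeft F a : R →ₗ[F] R)) = 0 := by
    rw [← heq]; exact hres
  rw [map_smul, smul_eq_mul] at heq2
  exact (mul_ne_zero hG ha) heq2
end

section
variable {F V : Type*} [Field F] [AddCommGroup V] [Module F V]

lemma nondeg_of_left (B : LinearMap.BilinForm F V) (halt : ∀ v, B v v = 0)
    (hnd : ∀ v, (∀ w, B v w = 0) → v = 0) : B.Nondegenerate := by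
  refine ⟨fun v h => hnd v h, fun v h => hnd v fun w => ?_⟩
  rw [alt_antisymm B halt, h w, neg_zero]

lemma lemT_lin [Finite F] [FiniteDimensional F V] [Nontrivial V] {G : Type*} [Group G] [Fintype G]
    (hodd : Odd (Nat.card G)) (hG : ((Nat.card G : ℕ) : F) ≠ 0)
    (B : LinearMap.BilinForm F V) (halt : ∀ v, B v v = 0)
    (hnd : ∀ v, (∀ w, B v w = 0) → v = 0)
    (ρ : G →* Module.End F V) (hρ : ∀ g u v, B (ρ g u) (ρ g v) = B u v)
    (hirr : ∀ U : Submodule F V, (∀ g, ∀ u ∈ U, ρ g u ∈ U) → U = ⊥ ∨ U = ⊤) :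
    ∃ S : Module.End F V, S ≠ 0 ∧ (∀ g v, S (ρ g v) = ρ g (S v)) ∧
      ∀ u v, B (S u) v = - B u (S v) := by
  classical
  have hanti := alt_antisymm B halt
  let b := Module.finBasis F V
  let J := LinearMap.BilinForm.toMatrix b B
  have hdet : IsUnit J.det := by
    rw [isUnit_iff_ne_zero]
    apply (LinearMap.BilinForm.nondegenerate_iff_det_ne_zero b).1
    exact nondeg_of_left B halt hnd
  have hJt : J.transpose = -J := by
    ext i j
    simp only [J, Matrix.transpose_apply, Matrix.neg_apply, LinearMap.BilinForm.toMatrix_apply]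
    exact hanti _ _
  let φ := LinearMap.toMatrixAlgEquiv b
  let ρ' : G →* Matrix (Fin (Module.finrank F V)) (Fin (Module.finrank F V)) F :=
    { toFun := fun g => φ (ρ g)
      map_one' := by rw [map_one]; exact map_one φ
      map_mul' := fun g h => by rw [map_mul]; exact map_mul φ _ _ }
  have hρ' : ∀ g, ρ' g = φ (ρ g) := fun g => rfl
  have hne : Nonempty (Fin (Module.finrank F V)) := ⟨⟨0, Module.finrank_pos⟩⟩
  have hsum : ∑ g, ρ g = 0 := by
    ext v
    let Fx : Submodule F V := ⨅ g, LinearMap.ker (ρ g - 1)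
    have hFx : ∀ w, w ∈ Fx ↔ ∀ g, ρ g w = w := by
      intro w
      simp [Fx, Submodule.mem_iInf, sub_eq_zero]
    have hFb : Fx = ⊥ := by
      rcases hirr Fx (by
        intro g u hu
        rw [(hFx u).1 hu g]; exact hu) with h | h
      · exact h
      exfalso
      obtain ⟨v0, hv0⟩ := exists_ne (0 : V)
      have hfix : ∀ w g, ρ g w = w := fun w => (hFx w).1 (by rw [h]; trivial)
      rcases hirr (F ∙ v0) (by intro g u hu; rw [hfix]; exact hu) with h1 | h1
      · rw [Submodule.span_singleton_eq_bot] at h1; exact hv0 h1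
      · apply hv0
        apply hnd
        intro w
        have : w ∈ F ∙ v0 := by rw [h1]; trivial
        obtain ⟨c, rfl⟩ := Submodule.mem_span_singleton.1 this
        rw [map_smul, halt, smul_zero]
    have : (∑ g, ρ g) v ∈ Fx := by
      rw [hFx]
      intro g
      rw [LinearMap.sum_apply, map_sum]
      refine Fintype.sum_equiv (Equiv.mulLeft g) _ _ ?_
      intro h
      simp
    rw [hFb, Submodule.mem_bot] at this
    rw [this]; rfl
  have hside1 : ∀ g, (ρ' g).transpose * J * ρ' g = J := by
    intro g
    have h1 : LinearMap.BilinForm.comp B (ρ g) (ρ g) = B := by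
      ext u v; exact hρ g u v
    have h2 := LinearMap.BilinForm.toMatrix_comp b b B (ρ g) (ρ g)
    rw [h1] at h2
    exact h2.symm
  have hside2 : ∑ g, ρ' g = 0 := by
    simp only [hρ']
    rw [← map_sum, hsum, map_zero]
  have hside3 : ∀ f, (∀ g, f * ρ' g = ρ' g * f) → f ≠ 0 → IsUnit f := by
    intro f hf hf0
    have h1 : ∀ g v, φ.symm f (ρ g v) = ρ g (φ.symm f v) := by
      intro g
      have h1 : φ.symm f * ρ g = ρ g * φ.symm f := by
        apply φ.injective
        rw [map_mul, map_mul, φ.apply_symm_apply]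
        exact hf g
      exact fun v => LinearMap.congr_fun h1 v
    have h2 : IsUnit (φ.symm f) := by
      rw [LinearMap.isUnit_iff_ker_eq_bot]
      rcases hirr (LinearMap.ker (φ.symm f)) (by
        intro g u hu
        rw [LinearMap.mem_ker] at hu ⊢
        rw [h1, hu, map_zero]) with h | h
      · exact h
      · exfalso
        rw [LinearMap.ker_eq_top] at h
        exact hf0 (by simpa using h)
    have := h2.map φ
    simpa using this
  obtain ⟨S, hS0, hSc, hSk⟩ := lemT_matrix hodd hG ρ' J J⁻¹ (Matrix.mul_nonsing_inv _ hdet)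
    (Matrix.nonsing_inv_mul _ hdet) hJt hside1 hside2 hside3
  · refine ⟨φ.symm S, ?_, ?_, ?_⟩
    · simpa using hS0
    · intro g v
      have h1 : φ.symm S * ρ g = ρ g * φ.symm S := by
        apply φ.injective
        rw [map_mul, map_mul, φ.apply_symm_apply]
        exact hSc g
      exact LinearMap.congr_fun h1 v
    · intro u v
      have h1 : LinearMap.BilinForm.compLeft B (φ.symm S) = - LinearMap.BilinForm.compRight B (φ.symm S) := by
        apply (LinearMap.BilinForm.toMatrix b).injective
        have hneg : LinearMap.BilinForm.toMatrix b (-LinearMap.BilinForm.compRight B (φ.symm S)) =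
            - LinearMap.BilinForm.toMatrix b (LinearMap.BilinForm.compRight B (φ.symm S)) := by
          ext i j; simp [LinearMap.BilinForm.toMatrix_apply]
        rw [hneg, LinearMap.BilinForm.toMatrix_compLeft, LinearMap.BilinForm.toMatrix_compRight]
        have h2 : LinearMap.toMatrix b b (φ.symm S) = S := φ.apply_symm_apply S
        rw [h2]; exact hSk
      exact LinearMap.congr_fun₂ h1 u v

/-- The antisymmetric form is a difference. -/
lemma exists_half [FiniteDimensional F V] (B : LinearMap.BilinForm F V) (halt : ∀ v, B v v = 0)
    (hnd : ∀ v, (∀ w, B v w = 0) → v = 0) :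
    ∃ e : V →ₗ[F] V, ∀ v w, B (e v) w + B v (e w) = B v w := by
  classical
  have hanti := alt_antisymm B halt
  let b := Module.finBasis F V
  let M : Matrix _ _ F := Matrix.of fun i j => if i < j then B (b i) (b j) else 0
  let L := Matrix.toBilin b M
  have hL : L - L.flip = B := by
    apply LinearMap.BilinForm.ext_basis b
    intro i j
    have h : ∀ i j, L (b i) (b j) = M i j := by
      intro i j
      have h0 := congrFun (congrFun (LinearMap.BilinForm.toMatrix_toBilin b M) i) j
      rwa [LinearMap.BilinForm.toMatrix_apply] at h0
    have h2 : (L - L.flip) (b i) (b j) = L (b i) (b j) - L (b j) (b i) := by simp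
    rw [h2, h, h]
    simp only [M, Matrix.of_apply]
    rcases lt_trichotomy i j with hij | hij | hij
    · simp [hij, not_lt.2 hij.le]
    · subst hij; simp [halt]
    · rw [if_neg (not_lt.2 hij.le), if_pos hij, hanti (b i)]; ring
  have hN : B.Nondegenerate := nondeg_of_left B halt hnd
  refine ⟨LinearMap.BilinForm.symmCompOfNondegenerate L B hN, ?_⟩
  intro v w
  have h3 := LinearMap.BilinForm.symmCompOfNondegenerate_left_apply L hN
  rw [hanti v, h3, h3]
  have h2 : (L - L.flip) v w = L v w - L w v := by simp
  rw [← hL, h2]; ring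
end

section
variable {F V : Type*} [Field F] [AddCommGroup V] [Module F V]

lemma orth_step (C : LinearMap.BilinForm F V) (A : Submodule F V)
    (hs : ∀ u ∈ A, ∀ v ∈ A, C u v = C v u)
    (hn : ∀ u ∈ A, (∀ v ∈ A, C u v = 0) → u = 0)
    (a : V) (ha : a ∈ A) (haa : C a a ≠ 0) :
    ∃ a ∈ A, C a a ≠ 0 ∧ (A ⊓ LinearMap.ker (C a) = ⊥ ∨
      ∃ w ∈ A ⊓ LinearMap.ker (C a), C w w ≠ 0) := by
  by_cases h1 : A ⊓ LinearMap.ker (C a) = ⊥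
  · exact ⟨a, ha, haa, Or.inl h1⟩
  by_cases h2 : ∃ w ∈ A ⊓ LinearMap.ker (C a), C w w ≠ 0
  · exact ⟨a, ha, haa, Or.inr h2⟩
  push Not at h2
  obtain ⟨u, hu, hu0⟩ := (Submodule.ne_bot_iff _).1 h1
  have huA := hu.1
  have hau : C a u = 0 := hu.2
  have hex : ∃ v ∈ A, C u v ≠ 0 := by
    by_contra h; push Not at h; exact hu0 (hn u huA h)
  obtain ⟨b, hb, hub⟩ := hex
  set v := (C u b)⁻¹ • (b - ((C a a)⁻¹ * C a b) • a) with hv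
  have hvA : v ∈ A := A.smul_mem _ (A.sub_mem hb (A.smul_mem _ ha))
  have hav : C a v = 0 := by
    simp only [hv, map_smul, map_sub, smul_eq_mul]
    field_simp; simp
  have hua : C u a = 0 := by rw [hs u huA a ha, hau]
  have hva : C v a = 0 := by rw [hs v hvA a ha, hav]
  have huv : C u v = 1 := by
    simp only [hv, map_smul, map_sub, smul_eq_mul, hua]
    field_simp; simp
  have hvu : C v u = 1 := by rw [hs v hvA u huA, huv]
  have huu := h2 u hu
  have hvv := h2 v ⟨hvA, hav⟩
  refine ⟨a + u, A.add_mem ha huA, ?_, Or.inr ⟨-(C a a)⁻¹ • a + v, ⟨?_, ?_⟩, ?_⟩⟩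
  · simpa [hau, hua, huu] using haa
  · exact A.add_mem (A.smul_mem _ ha) hvA
  · rw [SetLike.mem_coe, LinearMap.mem_ker]
    simp [hau, hua, huu, hav, huv, haa]
  · simp [hvv, hva, hav, haa]

lemma orth_basis [FiniteDimensional F V] (C : LinearMap.BilinForm F V) : ∀ (N : ℕ) (A : Submodule F V),
    Module.finrank F A ≤ N →
    (∀ u ∈ A, ∀ v ∈ A, C u v = C v u) →
    (∀ u ∈ A, (∀ v ∈ A, C u v = 0) → u = 0) →
    (A = ⊥ ∨ ∃ a ∈ A, C a a ≠ 0) →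
    ∃ (n : ℕ) (a : ℕ → V), (∀ i < n, a i ∈ A) ∧
      (∀ i j, i < n → j < n → i ≠ j → C (a i) (a j) = 0) ∧
      (∀ i < n, C (a i) (a i) ≠ 0) ∧
      ∀ P : Submodule F V, (∀ i < n, a i ∈ P) → A ≤ P := by
  intro N
  induction N with
  | zero =>
    intro A hA _ _ _
    have : A = ⊥ := Submodule.finrank_eq_zero.1 (by omega)
    exact ⟨0, fun _ => 0, by simp, by simp, by simp, by simp [this]⟩
  | succ N ih =>
    intro A hA hs hn h
    rcases h with h | ⟨a0, ha0, haa0⟩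
    · exact ⟨0, fun _ => 0, by simp, by simp, by simp, by simp [h]⟩
    obtain ⟨a, ha, haa, hA'⟩ := orth_step C A hs hn a0 ha0 haa0
    have hlt : A ⊓ LinearMap.ker (C a) < A := by
      refine lt_of_le_of_ne inf_le_left ?_
      intro h
      have : a ∈ A ⊓ LinearMap.ker (C a) := by rw [h]; exact ha
      exact haa this.2
    have hfr := Submodule.finrank_lt_finrank_of_lt hlt
    have hdec : ∀ b ∈ A, b - ((C a a)⁻¹ * C a b) • a ∈ A ⊓ LinearMap.ker (C a) := by
      intro b hb
      refine ⟨A.sub_mem hb (A.smul_mem _ ha), ?_⟩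
      rw [SetLike.mem_coe, LinearMap.mem_ker]
      simp only [map_smul, map_sub, smul_eq_mul]
      field_simp; simp
    obtain ⟨n, s, h1, h2, h3, h4⟩ := ih (A ⊓ LinearMap.ker (C a)) (by omega)
      (fun u hu v hv => hs u hu.1 v hv.1) (by
        intro u hu h
        apply hn u hu.1
        intro b hb
        have := h _ (hdec b hb)
        rw [map_sub, map_smul, hs u hu.1 a ha, show C a u = 0 from hu.2] at this
        simpa using this) hA'
    refine ⟨n + 1, fun i => Nat.casesOn i a s, ?_, ?_, ?_, ?_⟩
    · rintro (_ | i) hi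
      · exact ha
      · exact (h1 i (by omega)).1
    · rintro (_ | i) (_ | j) hi hj hij
      · exact absurd rfl hij
      · exact (h1 j (by omega)).2
      · have := h1 i (by omega)
        show C (s i) a = 0
        rw [hs _ this.1 _ ha]; exact this.2
      · exact h2 i j (by omega) (by omega) (by omega)
    · rintro (_ | i) hi
      · exact haa
      · exact h3 i (by omega)
    · intro P hP b hb
      have hle := h4 P (fun i hi => hP (i+1) (by omega))
      have := P.add_mem (hle (hdec b hb)) (P.smul_mem ((C a a)⁻¹ * C a b) (hP 0 (by omega)))
      simpa using this
end

section
variable {F V : Type*} [Field F] [AddCommGroup V] [Module F V]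

/-- rank one nilpotent map -/
def nilA (B : LinearMap.BilinForm F V) (a : ℕ → V) : V →ₗ[F] V :=
  (B.flip (a 0)).smulRight (a 0)

/-- path-type nilpotent map -/
def nilB (B : LinearMap.BilinForm F V) (a : ℕ → V) (k : ℕ) : V →ₗ[F] V :=
  ∑ i ∈ Finset.range k, ((B.flip (a i)).smulRight (a (i+1)) + (B.flip (a (i+1))).smulRight (a i))

lemma nilA_apply (B : LinearMap.BilinForm F V) (a : ℕ → V) (v : V) :
    nilA B a v = B v (a 0) • a 0 := by simp [nilA]

lemma nilB_apply (B : LinearMap.BilinForm F V) (a : ℕ → V) (k : ℕ) (v : V) :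
    nilB B a k v = ∑ i ∈ Finset.range k, (B v (a i) • a (i+1) + B v (a (i+1)) • a i) := by
  simp [nilB, LinearMap.sum_apply]

lemma nilB_of_diag (B : LinearMap.BilinForm F V) (a : ℕ → V) (k : ℕ) (v : V) (j : ℕ) (c : F)
    (h : ∀ i, i ≤ k → B v (a i) = if j = i then c else 0) (hj : j ≤ k) :
    nilB B a k v = (if j < k then c • a (j+1) else 0) + (if 0 < j then c • a (j-1) else 0) := by
  rw [nilB_apply, Finset.sum_add_distrib]
  congr 1
  · rw [Finset.sum_congr rfl (g := fun i => if j = i then c • a (j+1) else 0)]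
    · simp
    · intro i hi
      rw [h i (Finset.mem_range.1 hi).le]
      split_ifs with hh
      · rw [hh]
      · simp
  · rw [Finset.sum_congr rfl (g := fun i => if j - 1 = i then (if 0 < j then c • a (j-1) else 0) else 0)]
    · rw [Finset.sum_ite_eq]
      split_ifs with h1 h2 h2
      · rfl
      · rfl
      · simp at h1; omega
      · rfl
    · intro i hi
      have hi' := Finset.mem_range.1 hi
      rw [h (i+1) (by omega)]
      by_cases h1 : j = i + 1
      · subst h1; simp
      · rw [if_neg h1, zero_smul]
        split_ifs with h2 h3
        · omega
        · rfl
        · rfl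

lemma final_scalar (B : LinearMap.BilinForm F V) (a : ℕ → V) (k : ℕ) (hk : 1 ≤ k)
    (e g : V →ₗ[F] V) (c : ℕ → F)
    (hiso : ∀ i j, i ≤ k → j ≤ k → B (a i) (a j) = 0)
    (hC : ∀ i j, i ≤ k → j ≤ k → B (e (a i)) (a j) = if i = j then c i else 0)
    (hC2 : ∀ i j, i ≤ k → j ≤ k → B (e (e (a i))) (a j) = if i = j then c i else 0)
    (hc : ∀ i ≤ k, c i ≠ 0)
    (D1 D2 : V →ₗ[F] V)
    (hD1 : ∀ v, D1 v = nilA B a (e v) - e (nilA B a v) - nilA B a (e (nilA B a v)))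
    (hD2 : ∀ v, D2 v = nilB B a k (e v) - e (nilB B a k v) - nilB B a k (e (nilB B a k v)))
    (hg1 : ∀ v, g (D1 v) = D1 (g v)) (hg2 : ∀ v, g (D2 v) = D2 (g v)) :
    ∃ z : F, ∀ i ≤ k, g (a i) = z • a i := by
  have hNB : ∀ i ≤ k, nilB B a k (a i) = 0 := by
    intro i hi
    rw [nilB_apply]
    apply Finset.sum_eq_zero
    intro j hj
    have := Finset.mem_range.1 hj
    rw [hiso i j hi (by omega), hiso i (j+1) hi (by omega)]; simp
  have hNBe : ∀ i ≤ k, nilB B a k (e (a i)) =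
      (if i < k then c i • a (i+1) else 0) + (if 0 < i then c i • a (i-1) else 0) :=
    fun i hi => nilB_of_diag B a k _ i (c i) (fun j hj => hC i j hi hj) hi
  have hNBe2 : ∀ i ≤ k, nilB B a k (e (e (a i))) =
      (if i < k then c i • a (i+1) else 0) + (if 0 < i then c i • a (i-1) else 0) :=
    fun i hi => nilB_of_diag B a k _ i (c i) (fun j hj => hC2 i j hi hj) hi
  have hD2a : ∀ i ≤ k, D2 (a i) =
      (if i < k then c i • a (i+1) else 0) + (if 0 < i then c i • a (i-1) else 0) := by
    intro i hi
    rw [hD2, hNB i hi, hNBe i hi]; simp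
  have hD1a : ∀ i ≤ k, i ≠ 0 → D1 (a i) = 0 := by
    intro i hi h0
    rw [hD1]
    simp [nilA_apply, hiso i 0 hi (by omega), hC i 0 hi (by omega), h0]
  have hD1ea : ∀ i ≤ k, i ≠ 0 → D1 (e (a i)) = 0 := by
    intro i hi h0
    rw [hD1]
    simp [nilA_apply, hC i 0 hi (by omega), hC2 i 0 hi (by omega), h0]
  have hD1a0 : D1 (a 0) = c 0 • a 0 := by
    rw [hD1]
    simp [nilA_apply, hiso 0 0 (by omega) (by omega), hC 0 0 (by omega) (by omega)]
  have h12a : D1 (D2 (a 0)) = 0 := by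
    have hk' : 0 < k := hk
    rw [hD2a 0 (by omega)]
    simp only [hk', if_true, lt_irrefl, if_false, add_zero, map_smul, zero_add]
    rw [hD1a 1 hk (by omega), smul_zero]
  have hD2ea : D2 (e (a 0)) = c 0 • a 1 - c 0 • e (a 1) - c 0 • ((if 1 < k then c 1 • a 2 else 0) + c 1 • a 0) := by
    rw [hD2, hNBe 0 (by omega), hNBe2 0 (by omega)]
    have hk' : 0 < k := hk
    simp only [hk', if_true, lt_irrefl, if_false, add_zero, map_smul, zero_add]
    rw [hNBe 1 hk]
    simp
  have h12ea : D1 (D2 (e (a 0))) = (-(c 0 * c 1 * c 0)) • a 0 := by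
    rw [hD2ea]
    have : D1 (if 1 < k then c 1 • a 2 else 0) = 0 := by
      split_ifs with h
      · rw [map_smul, hD1a 2 (by omega) (by omega), smul_zero]
      · simp
    simp only [map_sub, map_smul, map_add, this, hD1a 1 hk (by omega), hD1ea 1 hk (by omega), hD1a0]
    simp [smul_smul, mul_assoc]
  have hform : ∀ v, ∃ s t : F, D1 v = s • a 0 + t • e (a 0) := by
    intro v
    refine ⟨B (e v) (a 0) - B v (a 0) * B (e (a 0)) (a 0), - B v (a 0), ?_⟩
    rw [hD1]
    simp only [nilA_apply, map_smul, smul_smul, LinearMap.smul_apply, smul_eq_mul]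
    module
  have himg : ∀ v, ∃ s : F, D1 (D2 (D1 v)) = s • a 0 := by
    intro v
    obtain ⟨s, t, h⟩ := hform v
    refine ⟨t * (-(c 0 * c 1 * c 0)), ?_⟩
    rw [h]
    simp only [map_add, map_smul, h12a, h12ea]
    simp [smul_smul]
  have hD1e : D1 (e (a 0)) = (c 0 - c 0 * c 0) • a 0 + (- c 0) • e (a 0) := by
    rw [hD1]
    simp only [nilA_apply, map_smul, smul_smul, LinearMap.smul_apply, smul_eq_mul,
      hC 0 0 (by omega) (by omega), hC2 0 0 (by omega) (by omega), if_true]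
    module
  have hval : D1 (D2 (D1 (e (a 0)))) = (c 0 * (c 0 * c 1 * c 0)) • a 0 := by
    rw [hD1e]
    simp only [map_add, map_smul, h12a, h12ea]
    simp [smul_smul]
  have hne : c 0 * (c 0 * c 1 * c 0) ≠ 0 := by
    have := hc 0 (by omega); have := hc 1 hk
    simp_all
  obtain ⟨s, hs⟩ := himg (g (e (a 0)))
  have hga : g (a 0) = ((c 0 * (c 0 * c 1 * c 0))⁻¹ * s) • a 0 := by
    have h1 : g (D1 (D2 (D1 (e (a 0))))) = s • a 0 := by
      rw [hg1, hg2, hg1, hs]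
    rw [hval, map_smul] at h1
    rw [mul_smul, ← h1, inv_smul_smul₀ hne]
  set z := (c 0 * (c 0 * c 1 * c 0))⁻¹ * s with hz
  refine ⟨z, ?_⟩
  intro i
  induction i using Nat.strong_induction_on with
  | _ i ih =>
    intro hi
    rcases i with _ | i
    · exact hga
    · have h1 := ih i (by omega) (by omega)
      have h2 : g (D2 (a i)) = z • D2 (a i) := by rw [hg2, h1, map_smul]
      rw [hD2a i (by omega)] at h2
      have hik : i < k := by omega
      simp only [hik, if_true, map_add, map_smul, smul_add] at h2
      have h3 : g (if 0 < i then c i • a (i-1) else 0) = z • (if 0 < i then c i • a (i-1) else 0) := by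
        split_ifs with h
        · rw [map_smul, ih (i-1) (by omega) (by omega), smul_comm]
        · simp
      rw [h3] at h2
      have h4 := add_right_cancel h2
      rw [smul_comm z] at h4
      exact smul_right_injective V (hc i (by omega)) h4

end


section
variable {F V : Type*} [Field F] [AddCommGroup V] [Module F V]
  {G : Type*} [Group G]

/-- invariance of a subspace -/
def InvSub (ρ : G →* Module.End F V) (W : Submodule F V) : Prop := ∀ g, ∀ w ∈ W, ρ g w ∈ W

/-- nondegeneracy on a subspace -/
def NDSub (B : LinearMap.BilinForm F V) (W : Submodule F V) : Prop :=
  ∀ v ∈ W, (∀ w ∈ W, B v w = 0) → v = 0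

/-- minimal nonzero invariant subspace -/
def IrrSub (ρ : G →* Module.End F V) (W : Submodule F V) : Prop :=
  InvSub ρ W ∧ W ≠ ⊥ ∧ ∀ T ≤ W, InvSub ρ T → T = ⊥ ∨ T = W

/-- invariant nondegenerate subspaces with an equivariant `e` and a good isotropic half -/
def GoodSub (B : LinearMap.BilinForm F V) (ρ : G →* Module.End F V) (W : Submodule F V) : Prop :=
  InvSub ρ W ∧ NDSub B W ∧ ∃ e : V →ₗ[F] V, (∀ g v, e (ρ g v) = ρ g (e v)) ∧ (∀ v, e v ∈ W) ∧
    (∀ v, (∀ w ∈ W, B v w = 0) → e v = 0) ∧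
    ∃ A ≤ W, (∀ a ∈ A, ∀ b ∈ A, B a b = 0) ∧ (∀ a ∈ A, ∀ b ∈ A, B (e a) b = B (e b) a) ∧
      (∀ a ∈ A, ∀ b ∈ A, B (e (e a)) b = B (e a) b) ∧
      (∀ a ∈ A, (∀ b ∈ A, B (e a) b = 0) → a = 0) ∧ W ≤ A ⊔ A.map e ∧
      (A = ⊥ ∨ ∃ a ∈ A, B (e a) a ≠ 0)

lemma inv_rho (ρ : G →* Module.End F V) (g : G) (v : V) : ρ g (ρ g⁻¹ v) = v := by
  rw [← Module.End.mul_apply, ← map_mul]; simp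

lemma rho_inv (ρ : G →* Module.End F V) (g : G) (v : V) : ρ g⁻¹ (ρ g v) = v := by
  rw [← Module.End.mul_apply, ← map_mul]; simp

lemma isom_left (B : LinearMap.BilinForm F V) (ρ : G →* Module.End F V)
    (hρ : ∀ g u v, B (ρ g u) (ρ g v) = B u v) (g : G) (u v : V) :
    B (ρ g u) v = B u (ρ g⁻¹ v) := by
  rw [← hρ g u, inv_rho]

lemma isom_right (B : LinearMap.BilinForm F V) (ρ : G →* Module.End F V)
    (hρ : ∀ g u v, B (ρ g u) (ρ g v) = B u v) (g : G) (u v : V) :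
    B u (ρ g v) = B (ρ g⁻¹ u) v := by
  rw [← hρ g _ v, inv_rho]

lemma InvSub.orth {B : LinearMap.BilinForm F V} {ρ : G →* Module.End F V}
    (hρ : ∀ g u v, B (ρ g u) (ρ g v) = B u v) {W : Submodule F V} (hW : InvSub ρ W) :
    InvSub ρ (B.orthogonal W) := by
  intro g v hv
  rw [LinearMap.BilinForm.mem_orthogonal_iff] at hv ⊢
  intro w hw
  show B w (ρ g v) = 0
  rw [isom_right B ρ hρ]
  exact hv _ (hW _ w hw)

lemma InvSub.sup {ρ : G →* Module.End F V} {U W : Submodule F V} (hU : InvSub ρ U)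
    (hW : InvSub ρ W) : InvSub ρ (U ⊔ W) := by
  intro g v hv
  obtain ⟨u, hu, w, hw, rfl⟩ := Submodule.mem_sup.1 hv
  rw [map_add]
  exact Submodule.add_mem_sup (hU g u hu) (hW g w hw)

lemma InvSub.inf {ρ : G →* Module.End F V} {U W : Submodule F V} (hU : InvSub ρ U)
    (hW : InvSub ρ W) : InvSub ρ (U ⊓ W) := fun g v hv => ⟨hU g v hv.1, hW g v hv.2⟩

lemma proj_comm {ρ : G →* Module.End F V} {P Q : Submodule F V} (h : IsCompl P Q)
    (hP : InvSub ρ P) (hQ : InvSub ρ Q) (g : G) (v : V) :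
    P.projection Q h (ρ g v) = ρ g (P.projection Q h v) := by
  have : v ∈ P ⊔ Q := by rw [h.sup_eq_top]; trivial
  obtain ⟨a, ha, b, hb, rfl⟩ := Submodule.mem_sup.1 this
  rw [map_add, map_add, map_add, Submodule.projection_apply_of_mem_left h (hP g a ha),
    Submodule.projection_apply_of_mem_right h (hQ g b hb),
    Submodule.projection_apply_of_mem_left h ha, Submodule.projection_apply_of_mem_right h hb]
  simp

lemma mem_orth_iff {B : LinearMap.BilinForm F V} (halt : ∀ v, B v v = 0) {W : Submodule F V} {v : V} :
    v ∈ B.orthogonal W ↔ ∀ w ∈ W, B v w = 0 := by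
  rw [LinearMap.BilinForm.mem_orthogonal_iff]
  constructor
  · intro h w hw; rw [alt_antisymm B halt, show B w v = 0 from h w hw, neg_zero]
  · intro h w hw; show B w v = 0; rw [alt_antisymm B halt, h w hw, neg_zero]

lemma nd_compl [FiniteDimensional F V] {B : LinearMap.BilinForm F V} (halt : ∀ v, B v v = 0)
    {W : Submodule F V} (hW : NDSub B W) : IsCompl W (B.orthogonal W) := by
  have hrefl : B.IsRefl := by
    intro u v h
    rw [alt_antisymm B halt, h, neg_zero]
  rw [LinearMap.BilinForm.isCompl_orthogonal_iff_disjoint hrefl, Submodule.disjoint_def]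
  intro v hv hv'
  exact hW v hv ((mem_orth_iff halt).1 hv')

lemma exists_proj [FiniteDimensional F V] {B : LinearMap.BilinForm F V} (halt : ∀ v, B v v = 0)
    {ρ : G →* Module.End F V} (hρ : ∀ g u v, B (ρ g u) (ρ g v) = B u v)
    {W : Submodule F V} (hI : InvSub ρ W) (hW : NDSub B W) :
    ∃ p : V →ₗ[F] V, (∀ g v, p (ρ g v) = ρ g (p v)) ∧ (∀ v, p v ∈ W) ∧ (∀ v ∈ W, p v = v) ∧
      (∀ v, (∀ w ∈ W, B v w = 0) → p v = 0) ∧ (∀ v, ∀ w ∈ W, B (p v) w = B v w) := by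
  have hc := nd_compl halt hW
  refine ⟨W.projection _ hc, proj_comm hc hI (hI.orth hρ), Submodule.projection_apply_mem hc,
    fun v hv => Submodule.projection_apply_of_mem_left hc hv,
    fun v hv => Submodule.projection_apply_of_mem_right hc ((mem_orth_iff halt).2 hv), ?_⟩
  intro v w hw
  have : v ∈ W ⊔ B.orthogonal W := by rw [hc.sup_eq_top]; trivial
  obtain ⟨a, ha, b, hb, rfl⟩ := Submodule.mem_sup.1 this
  rw [map_add, Submodule.projection_apply_of_mem_left hc ha,
    Submodule.projection_apply_of_mem_right hc hb, add_zero, map_add, LinearMap.add_apply,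
    (mem_orth_iff halt).1 hb w hw, add_zero]

lemma good_of_data [FiniteDimensional F V] {B : LinearMap.BilinForm F V} (halt : ∀ v, B v v = 0)
    {ρ : G →* Module.End F V} {W : Submodule F V} (hI : InvSub ρ W) (hW : NDSub B W)
    (e : V →ₗ[F] V) (hcomm : ∀ g v, e (ρ g v) = ρ g (e v)) (heW : ∀ v, e v ∈ W)
    (he0 : ∀ v, (∀ w ∈ W, B v w = 0) → e v = 0)
    (hadj : ∀ v ∈ W, ∀ w ∈ W, B (e v) w + B v (e w) = B v w)
    (h2 : ∀ v ∈ W, e v + e v = v → v = 0)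
    (hfld : ∀ q : Polynomial F, (∀ v ∈ W, Polynomial.aeval (e - e * e : Module.End F V) q v = 0) ∨
      (∀ v ∈ W, Polynomial.aeval (e - e * e : Module.End F V) q v = 0 → v = 0)) :
    GoodSub B ρ W :=
  ⟨hI, hW, e, hcomm, heW, he0, step_two B halt W hW e (fun v _ => heW v) hadj h2 hfld⟩

lemma irr_fld {ρ : G →* Module.End F V} {U : Submodule F V} (hU : IrrSub ρ U)
    (e : V →ₗ[F] V) (hcomm : ∀ g v, e (ρ g v) = ρ g (e v)) (q : Polynomial F) :
    (∀ v ∈ U, Polynomial.aeval (e - e * e : Module.End F V) q v = 0) ∨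
      (∀ v ∈ U, Polynomial.aeval (e - e * e : Module.End F V) q v = 0 → v = 0) := by
  have hc : ∀ g, Commute (Polynomial.aeval (e - e * e : Module.End F V) q) (ρ g) := by
    intro g
    have h1 : Commute (e : Module.End F V) (ρ g) := LinearMap.ext fun v => hcomm g v
    have h2 : Commute (e - e * e : Module.End F V) (ρ g) := h1.sub_left (h1.mul_left h1)
    induction q using Polynomial.induction_on' with
    | add p q hp hq => rw [map_add]; exact hp.add_left hq
    | monomial n c =>
      rw [Polynomial.aeval_monomial]
      exact Commute.mul_left (Algebra.commutes c _) (h2.pow_left n)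
  set κ := Polynomial.aeval (e - e * e : Module.End F V) q
  rcases hU.2.2 (U ⊓ LinearMap.ker κ) inf_le_left (by
    intro g v hv
    refine ⟨hU.1 g v hv.1, ?_⟩
    rw [SetLike.mem_coe, LinearMap.mem_ker]
    have h1 : κ (ρ g v) = ρ g (κ v) := LinearMap.congr_fun (hc g) v
    rw [h1, show κ v = 0 from hv.2, map_zero]) with h | h
  · right
    intro v hv h0
    have : v ∈ U ⊓ LinearMap.ker κ := ⟨hv, h0⟩
    rwa [h, Submodule.mem_bot] at this
  · left
    intro v hv
    rw [← h] at hv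
    exact hv.2

/-- Averaging of an endomorphism. -/
lemma exists_average [Fintype G] (ρ : G →* Module.End F V) (f : V →ₗ[F] V) :
    ∃ f' : V →ₗ[F] V, (∀ g v, f' (ρ g v) = ρ g (f' v)) ∧
      ∀ v, f' v = (Nat.card G : F)⁻¹ • ∑ g, ρ g (f (ρ g⁻¹ v)) := by
  refine ⟨(Nat.card G : F)⁻¹ • ∑ g, (ρ g : V →ₗ[F] V) ∘ₗ f ∘ₗ (ρ g⁻¹ : V →ₗ[F] V), ?_, ?_⟩
  · intro g v
    simp only [LinearMap.smul_apply, LinearMap.sum_apply, LinearMap.comp_apply, map_smul, map_sum]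
    congr 1
    refine Fintype.sum_equiv (Equiv.mulLeft g⁻¹) _ _ ?_
    intro h
    simp only [Equiv.coe_mulLeft, _root_.mul_inv_rev, inv_inv, map_mul, Module.End.mul_apply, inv_rho]
  · intro v
    simp [LinearMap.sum_apply]

lemma average_const {G : Type*} [Fintype G] (hG : ((Nat.card G : ℕ) : F) ≠ 0) {M : Type*} [AddCommGroup M]
    [Module F M] (x : G → M) (y : M) (h : ∀ g, x g = y) : (Nat.card G : F)⁻¹ • ∑ g, x g = y := by
  simp only [h, Finset.sum_const, Finset.card_univ, Nat.card_eq_fintype_card] at hG ⊢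
  rw [← Nat.cast_smul_eq_nsmul F, inv_smul_smul₀ hG]

lemma good_irr [Finite F] [FiniteDimensional F V] [Fintype G]
    (hodd : Odd (Nat.card G)) (hG : ((Nat.card G : ℕ) : F) ≠ 0)
    {B : LinearMap.BilinForm F V} (halt : ∀ v, B v v = 0)
    (hnd : ∀ v, (∀ w, B v w = 0) → v = 0)
    {ρ : G →* Module.End F V} (hρ : ∀ g u v, B (ρ g u) (ρ g v) = B u v)
    {U : Submodule F V} (hU : IrrSub ρ U) (hUn : NDSub B U) : GoodSub B ρ U := by
  have hanti := alt_antisymm B halt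
  obtain ⟨p, hpc, hpU, hp1, hp0, hpB⟩ := exists_proj halt hρ hU.1 hUn
  have hpB' : ∀ v, ∀ w ∈ U, B w (p v) = B w v := by
    intro v w hw
    rw [hanti, hpB v w hw, ← hanti]
  by_cases h2 : (2 : F) = 0
  · obtain ⟨e0, he0⟩ := exists_half B halt hnd
    obtain ⟨e1, he1c, he1⟩ := exists_average ρ e0
    have he1a : ∀ v w, B (e1 v) w + B v (e1 w) = B v w := by
      intro v w
      rw [he1, he1]
      simp only [map_smul, map_sum, LinearMap.smul_apply, LinearMap.sum_apply]
      rw [← smul_add, ← Finset.sum_add_distrib]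
      apply average_const hG
      intro g
      rw [isom_left B ρ hρ g _ w, isom_right B ρ hρ g v, he0, hρ]
    have hec : ∀ g v, (p ∘ₗ e1 ∘ₗ p) (ρ g v) = ρ g ((p ∘ₗ e1 ∘ₗ p) v) := by
      intro g v
      simp only [LinearMap.comp_apply, hpc, he1c]
    refine good_of_data halt hU.1 hUn (p ∘ₗ e1 ∘ₗ p) hec (fun v => hpU _) ?_ ?_ ?_
      (irr_fld hU _ hec)
    · intro v hv
      simp only [LinearMap.comp_apply, hp0 v hv, map_zero]
    · intro v hv w hw
      simp only [LinearMap.comp_apply, hp1 v hv, hp1 w hw]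
      rw [hpB _ w hw, hpB' _ v hv, he1a]
    · intro v hv h
      rw [← two_smul F, h2, zero_smul] at h
      exact h.symm
  · have hUnt : Nontrivial U := Submodule.nontrivial_iff_ne_bot.2 hU.2.1
    let ρU : G →* Module.End F U :=
      { toFun := fun g => (ρ g).restrict (hU.1 g)
        map_one' := by ext v; simp [LinearMap.restrict_apply]
        map_mul' := fun g h => by ext v; simp [LinearMap.restrict_apply] }
    have hρU : ∀ g (v : U), ((ρU g v : U) : V) = ρ g v := fun g v => rfl
    let BU : LinearMap.BilinForm F U := B.restrict U
    have hBU : ∀ u v : U, BU u v = B u v := fun u v => rfl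
    obtain ⟨S, hS0, hSc, hSs⟩ := lemT_lin hodd hG BU (fun v => halt v)
      (fun v h => Subtype.ext (hUn v v.2 (fun w hw => h ⟨w, hw⟩))) ρU
      (fun g u v => hρ g u v) (by
        intro T hT
        rcases hU.2.2 (T.map U.subtype) (Submodule.map_subtype_le U T) (by
          rintro g _ ⟨t, ht, rfl⟩
          exact ⟨ρU g t, hT g t ht, rfl⟩) with h | h
        · left
          exact Submodule.map_injective_of_injective U.injective_subtype (h.trans (Submodule.map_bot _).symm)
        · right
          rw [eq_top_iff]
          intro t _
          have : (t : V) ∈ T.map U.subtype := by rw [h]; exact t.2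
          obtain ⟨t', ht', h'⟩ := this
          rwa [← Subtype.ext h'])
    have hSker : ∀ v, S v = 0 → v = 0 := by
      intro v hv
      rcases hU.2.2 ((LinearMap.ker S).map U.subtype) (Submodule.map_subtype_le U _) (by
          rintro g _ ⟨t, ht, rfl⟩
          refine ⟨ρU g t, ?_, rfl⟩
          have ht' : S t = 0 := ht
          show S (ρU g t) = 0
          rw [hSc, ht', map_zero]) with h | h
      · have h3 := Submodule.map_injective_of_injective U.injective_subtype (h.trans (Submodule.map_bot _).symm)
        have : v ∈ LinearMap.ker S := hv
        rwa [h3, Submodule.mem_bot] at this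
      · exfalso
        apply hS0
        ext1 t
        have : (t : V) ∈ (LinearMap.ker S).map U.subtype := by rw [h]; exact t.2
        obtain ⟨t', ht', h'⟩ := this
        have h4 : t' = t := Subtype.ext h'
        rw [← h4]; exact ht'
    let pU : V →ₗ[F] U := p.codRestrict U hpU
    have hpUc : ∀ g v, pU (ρ g v) = ρU g (pU v) := fun g v => Subtype.ext (hpc g v)
    have hpU1 : ∀ v (hv : v ∈ U), pU v = ⟨v, hv⟩ := fun v hv => Subtype.ext (hp1 v hv)
    let e : V →ₗ[F] V := U.subtype ∘ₗ ((2 : F)⁻¹ • (LinearMap.id + S)) ∘ₗ pU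
    have he : ∀ v, e v = (2 : F)⁻¹ • (p v + (S (pU v) : V)) := fun v => rfl
    have hec : ∀ g v, e (ρ g v) = ρ g (e v) := by
      intro g v
      rw [he, he, hpUc, hSc, hpc, map_smul, map_add]; rfl
    refine good_of_data halt hU.1 hUn e hec (fun v => (((2 : F)⁻¹ • (LinearMap.id + S) : U →ₗ[F] U) (pU v)).2) ?_ ?_ ?_
      (irr_fld hU _ hec)
    · intro v hv
      have h3 : pU v = 0 := Subtype.ext (hp0 v hv)
      rw [he, hp0 v hv, h3]; simp
    · intro v hv w hw
      rw [he, he, hp1 v hv, hp1 w hw, hpU1 v hv, hpU1 w hw]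
      have h3 := hSs ⟨v, hv⟩ ⟨w, hw⟩
      rw [hBU, hBU] at h3
      simp only [map_smul, map_add, LinearMap.smul_apply, LinearMap.add_apply, smul_eq_mul]
      simp only at h3
      rw [h3]
      field_simp
      ring
    · intro v hv h
      rw [he, hp1 v hv, hpU1 v hv, ← two_smul F, smul_smul, mul_inv_cancel₀ h2, one_smul] at h
      have h4 : S ⟨v, hv⟩ = 0 := Subtype.ext (by simpa using h)
      exact congrArg Subtype.val (hSker _ h4)


lemma good_hyp [FiniteDimensional F V]
    {B : LinearMap.BilinForm F V} (halt : ∀ v, B v v = 0)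
    {ρ : G →* Module.End F V} (hρ : ∀ g u v, B (ρ g u) (ρ g v) = B u v)
    {U X : Submodule F V} (hU : InvSub ρ U) (hX : InvSub ρ X)
    (hUi : ∀ u ∈ U, ∀ v ∈ U, B u v = 0) (hXi : ∀ u ∈ X, ∀ v ∈ X, B u v = 0)
    (hUX : ∀ u ∈ U, (∀ x ∈ X, B u x = 0) → u = 0)
    (hXU : ∀ x ∈ X, (∀ u ∈ U, B x u = 0) → x = 0) : GoodSub B ρ (U ⊔ X) := by
  have hanti := alt_antisymm B halt
  have hI := hU.sup hX
  have hN : NDSub B (U ⊔ X) := by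
    intro v hv h
    obtain ⟨u, hu, x, hx, rfl⟩ := Submodule.mem_sup.1 hv
    have h1 : u = 0 := by
      apply hUX u hu
      intro y hy
      have := h y (le_sup_right (a := U) hy)
      rwa [map_add, LinearMap.add_apply, hXi x hx y hy, add_zero] at this
    have h2 : x = 0 := by
      apply hXU x hx
      intro y hy
      have := h y (le_sup_left (a := U) hy)
      rwa [map_add, LinearMap.add_apply, hUi u hu y hy, zero_add] at this
    simp [h1, h2]
  have hc0 := nd_compl halt hN
  have hdisj : Disjoint U X := by
    rw [Submodule.disjoint_def]
    intro v hv hv'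
    exact hUX v hv (fun x hx => hXi v hv' x hx)
  have hc : IsCompl U (X ⊔ B.orthogonal (U ⊔ X)) := by
    constructor
    · rw [Submodule.disjoint_def]
      intro u hu hu'
      obtain ⟨x, hx, y, hy, rfl⟩ := Submodule.mem_sup.1 hu'
      have h1 : y ∈ U ⊔ X := by
        have : y = (x + y) - x := by abel
        rw [this]
        exact Submodule.sub_mem _ (le_sup_left (a := U) hu) (le_sup_right (a := U) hx)
      have h2 : y = 0 := (Submodule.disjoint_def.1 hc0.disjoint) y h1 hy
      rw [h2, add_zero] at hu ⊢
      exact (Submodule.disjoint_def.1 hdisj) x hu hx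
    · rw [codisjoint_iff, ← sup_assoc, hc0.sup_eq_top]
  let e : V →ₗ[F] V := U.projection _ hc
  have heU : ∀ v, e v ∈ U := Submodule.projection_apply_mem hc
  have he1 : ∀ u ∈ U, e u = u := fun u hu => Submodule.projection_apply_of_mem_left hc hu
  have he0 : ∀ x ∈ X ⊔ B.orthogonal (U ⊔ X), e x = 0 := fun x hx =>
    Submodule.projection_apply_of_mem_right hc hx
  have heX : ∀ x ∈ X, e x = 0 := fun x hx => he0 x (le_sup_left (a := X) hx)
  refine good_of_data halt hI hN e (proj_comm hc hU (hX.sup (hI.orth hρ)))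
    (fun v => le_sup_left (a := U) (heU v)) ?_ ?_ ?_ ?_
  · intro v hv
    exact he0 v (le_sup_right (a := X) ((mem_orth_iff halt).2 hv))
  · intro v hv w hw
    obtain ⟨u, hu, x, hx, rfl⟩ := Submodule.mem_sup.1 hv
    obtain ⟨u', hu', x', hx', rfl⟩ := Submodule.mem_sup.1 hw
    simp [he1 u hu, he1 u' hu', heX x hx, heX x' hx', hUi u hu u' hu', hXi x hx x' hx']
  · intro v hv h
    obtain ⟨u, hu, x, hx, rfl⟩ := Submodule.mem_sup.1 hv
    rw [map_add, he1 u hu, heX x hx, add_zero] at h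
    have h1 : u = x := add_left_cancel h
    have h2 : u = 0 := (Submodule.disjoint_def.1 hdisj) u hu (h1 ▸ hx)
    rw [← h1, h2, add_zero]
  · intro q
    have hν : (e - e * e : Module.End F V) = 0 := by
      ext v
      show e v - e (e v) = 0
      rw [he1 _ (heU v), sub_self]
    rw [hν]
    have hq : ∀ v, Polynomial.aeval (0 : Module.End F V) q v = q.coeff 0 • v := by
      intro v
      rw [← Polynomial.coeff_zero_eq_aeval_zero' ]
      simp
    by_cases h0 : q.coeff 0 = 0
    · left; intro v _; rw [hq, h0, zero_smul]
    · right; intro v _ hv; rw [hq] at hv; exact (smul_eq_zero.1 hv).resolve_left h0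

lemma good_combine {B : LinearMap.BilinForm F V} (halt : ∀ v, B v v = 0)
    {ρ : G →* Module.End F V} {W W' : Submodule F V} (hW : GoodSub B ρ W) (hW' : GoodSub B ρ W')
    (hperp : ∀ w ∈ W, ∀ w' ∈ W', B w w' = 0) : GoodSub B ρ (W ⊔ W') := by
  have hanti := alt_antisymm B halt
  have hperp' : ∀ w' ∈ W', ∀ w ∈ W, B w' w = 0 := by
    intro w' hw' w hw; rw [hanti, hperp w hw w' hw', neg_zero]
  obtain ⟨hI, hN, e, hec, heW, he0, A, hAW, hAi, hAs, hA2, hAn, hAg, hAe⟩ := hW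
  obtain ⟨hI', hN', e', hec', heW', he0', A', hAW', hAi', hAs', hA2', hAn', hAg', hAe'⟩ := hW'
  have hee' : ∀ w' ∈ W', e w' = 0 := fun w' hw' => he0 w' (hperp' w' hw')
  have he'e : ∀ w ∈ W, e' w = 0 := fun w hw => he0' w (hperp w hw)
  have hE : ∀ w ∈ W, ∀ w' ∈ W', (e + e') (w + w') = e w + e' w' := by
    intro w hw w' hw'
    simp [hee' w' hw', he'e w hw]
  have hBB : ∀ w ∈ W, ∀ w' ∈ W', ∀ x ∈ W, ∀ x' ∈ W', B (w + w') (x + x') = B w x + B w' x' := by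
    intro w hw w' hw' x hx x' hx'
    simp [hperp w hw x' hx', hperp' w' hw' x hx]
  refine ⟨hI.sup hI', ?_, e + e', ?_, ?_, ?_, A ⊔ A', sup_le_sup hAW hAW', ?_, ?_, ?_, ?_, ?_, ?_⟩
  · intro v hv h
    obtain ⟨w, hw, w', hw', rfl⟩ := Submodule.mem_sup.1 hv
    have h1 : w = 0 := hN w hw (fun x hx => by
      have := h _ (Submodule.add_mem_sup hx W'.zero_mem)
      rw [hBB w hw w' hw' x hx 0 W'.zero_mem] at this
      simpa using this)
    have h2 : w' = 0 := hN' w' hw' (fun x hx => by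
      have := h _ (Submodule.add_mem_sup W.zero_mem hx)
      rw [hBB w hw w' hw' 0 W.zero_mem x hx] at this
      simpa using this)
    simp [h1, h2]
  · intro g v
    simp [hec, hec']
  · intro v
    exact Submodule.add_mem_sup (heW v) (heW' v)
  · intro v hv
    have h1 := he0 v (fun w hw => hv w (le_sup_left (a := W) hw))
    have h2 := he0' v (fun w hw => hv w (le_sup_right (a := W) hw))
    simp [h1, h2]
  · intro v hv w hw
    obtain ⟨a, ha, a', ha', rfl⟩ := Submodule.mem_sup.1 hv
    obtain ⟨b, hb, b', hb', rfl⟩ := Submodule.mem_sup.1 hw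
    rw [hBB a (hAW ha) a' (hAW' ha') b (hAW hb) b' (hAW' hb'), hAi a ha b hb, hAi' a' ha' b' hb',
      add_zero]
  · intro v hv w hw
    obtain ⟨a, ha, a', ha', rfl⟩ := Submodule.mem_sup.1 hv
    obtain ⟨b, hb, b', hb', rfl⟩ := Submodule.mem_sup.1 hw
    rw [hE a (hAW ha) a' (hAW' ha'), hE b (hAW hb) b' (hAW' hb'),
      hBB _ (heW a) _ (heW' a') b (hAW hb) b' (hAW' hb'),
      hBB _ (heW b) _ (heW' b') a (hAW ha) a' (hAW' ha'), hAs a ha b hb, hAs' a' ha' b' hb']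
  · intro v hv w hw
    obtain ⟨a, ha, a', ha', rfl⟩ := Submodule.mem_sup.1 hv
    obtain ⟨b, hb, b', hb', rfl⟩ := Submodule.mem_sup.1 hw
    rw [hE a (hAW ha) a' (hAW' ha'), hE _ (heW a) _ (heW' a'),
      hBB _ (heW _) _ (heW' _) b (hAW hb) b' (hAW' hb'),
      hBB _ (heW a) _ (heW' a') b (hAW hb) b' (hAW' hb'), hA2 a ha b hb, hA2' a' ha' b' hb']
  · intro v hv h
    obtain ⟨a, ha, a', ha', rfl⟩ := Submodule.mem_sup.1 hv
    rw [hE a (hAW ha) a' (hAW' ha')] at h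
    have h1 : a = 0 := hAn a ha (fun x hx => by
      have := h _ (Submodule.add_mem_sup hx A'.zero_mem)
      rw [hBB _ (heW a) _ (heW' a') x (hAW hx) 0 W'.zero_mem] at this
      simpa using this)
    have h2 : a' = 0 := hAn' a' ha' (fun x hx => by
      have := h _ (Submodule.add_mem_sup A.zero_mem hx)
      rw [hBB _ (heW a) _ (heW' a') 0 W.zero_mem x (hAW' hx)] at this
      simpa using this)
    simp [h1, h2]
  · have key : ∀ a ∈ A, ∀ a' ∈ A', e a + e' a' ∈ (A ⊔ A') ⊔ (A ⊔ A').map (e + e') := by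
      intro a ha a' ha'
      rw [← hE a (hAW ha) a' (hAW' ha')]
      exact le_sup_right (a := A ⊔ A') (Submodule.mem_map_of_mem (Submodule.add_mem_sup ha ha'))
    refine sup_le (hAg.trans (sup_le ?_ ?_)) (hAg'.trans (sup_le ?_ ?_))
    · exact le_sup_left.trans le_sup_left
    · rintro _ ⟨a, ha, rfl⟩
      have := key a ha 0 A'.zero_mem
      simpa using this
    · exact le_sup_right.trans le_sup_left
    · rintro _ ⟨a, ha, rfl⟩
      have := key 0 A.zero_mem a ha
      simpa using this
  · rcases hAe with h | ⟨a, ha, haa⟩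
    · rcases hAe' with h' | ⟨a, ha, haa⟩
      · left; simp [h, h']
      · right
        refine ⟨a, le_sup_right (a := A) ha, ?_⟩
        have := hE 0 W.zero_mem a (hAW' ha)
        simp only [zero_add, map_zero] at this
        rw [this]; exact haa
    · right
      refine ⟨a, le_sup_left (a := A) ha, ?_⟩
      have := hE a (hAW ha) 0 W'.zero_mem
      simp only [add_zero, map_zero] at this
      rw [this]; exact haa

lemma exists_irr [FiniteDimensional F V] (ρ : G →* Module.End F V) {Y : Submodule F V}
    (hY : InvSub ρ Y) (h0 : Y ≠ ⊥) : ∃ U ≤ Y, IrrSub ρ U := by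
  obtain ⟨U, ⟨hUY, hUI, hU0⟩, hmin⟩ := exists_minimal_of_wellFoundedLT
    (fun U : Submodule F V => U ≤ Y ∧ InvSub ρ U ∧ U ≠ ⊥) ⟨Y, le_rfl, hY, h0⟩
  refine ⟨U, hUY, hUI, hU0, ?_⟩
  intro T hT hTI
  by_cases h : T = ⊥
  · exact Or.inl h
  · exact Or.inr (le_antisymm hT (hmin ⟨hT.trans hUY, hTI, h⟩ hT))

lemma irr_dichotomy {B : LinearMap.BilinForm F V} (halt : ∀ v, B v v = 0)
    {ρ : G →* Module.End F V} (hρ : ∀ g u v, B (ρ g u) (ρ g v) = B u v)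
    {U X : Submodule F V} (hU : IrrSub ρ U) (hX : InvSub ρ X) :
    (∀ u ∈ U, (∀ x ∈ X, B u x = 0) → u = 0) ∨ (∀ u ∈ U, ∀ x ∈ X, B u x = 0) := by
  rcases hU.2.2 (U ⊓ B.orthogonal X) inf_le_left (hU.1.inf (hX.orth hρ)) with h | h
  · left
    intro u hu hux
    have : u ∈ U ⊓ B.orthogonal X := ⟨hu, (mem_orth_iff halt).2 hux⟩
    rwa [h, Submodule.mem_bot] at this
  · right
    intro u hu
    rw [← h] at hu
    exact (mem_orth_iff halt).1 hu.2

lemma exists_good_sub [Finite F] [FiniteDimensional F V] [Fintype G]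
    (hodd : Odd (Nat.card G)) (hG : ((Nat.card G : ℕ) : F) ≠ 0)
    {B : LinearMap.BilinForm F V} (halt : ∀ v, B v v = 0)
    (hnd : ∀ v, (∀ w, B v w = 0) → v = 0)
    {ρ : G →* Module.End F V} (hρ : ∀ g u v, B (ρ g u) (ρ g v) = B u v)
    {Y : Submodule F V} (hY : InvSub ρ Y) (hYn : NDSub B Y) (h0 : Y ≠ ⊥) :
    ∃ W ≤ Y, W ≠ ⊥ ∧ GoodSub B ρ W := by
  obtain ⟨U, hUY, hU⟩ := exists_irr ρ hY h0
  rcases irr_dichotomy halt hρ hU hU.1 with hUn | hUi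
  · exact ⟨U, hUY, hU.2.1, good_irr hodd hG halt hnd hρ hU hUn⟩
  obtain ⟨p, hpc, hpY, hp1, hp0, hpB⟩ := exists_proj halt hρ hY hYn
  obtain ⟨Q0, hQ0⟩ := Submodule.exists_isCompl (B.orthogonal U)
  obtain ⟨q, hqc, hq⟩ := exists_average ρ ((B.orthogonal U).projection Q0 hQ0)
  have hUo := hU.1.orth hρ
  have hq1 : ∀ v ∈ B.orthogonal U, q v = v := by
    intro v hv
    rw [hq]
    apply average_const hG
    intro g
    rw [Submodule.projection_apply_of_mem_left hQ0 (hUo _ v hv), inv_rho]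
  have hqU : ∀ v, q v ∈ B.orthogonal U := by
    intro v
    rw [hq]
    refine Submodule.smul_mem _ _ (Submodule.sum_mem _ fun g _ => hUo g _ ?_)
    exact Submodule.projection_apply_mem hQ0 _
  let Q : Submodule F V := (LinearMap.ker q).map p
  have hQI : InvSub ρ Q := by
    rintro g _ ⟨k, hk, rfl⟩
    refine ⟨ρ g k, ?_, hpc g k⟩
    have hk' : q k = 0 := hk
    show q (ρ g k) = 0
    rw [hqc, hk', map_zero]
  have hQY : Q ≤ Y := by
    rintro _ ⟨k, hk, rfl⟩
    exact hpY k
  have hQU : ∀ x ∈ Q, (∀ u ∈ U, B x u = 0) → x = 0 := by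
    rintro _ ⟨k, hk, rfl⟩ h
    have hk' : q k = 0 := hk
    have h1 : k ∈ B.orthogonal U := by
      rw [mem_orth_iff halt]
      intro u hu
      rw [← hpB k u (hUY hu)]
      exact h u hu
    have h2 : k = 0 := by rw [← hq1 k h1, hk']
    rw [h2, map_zero]
  have hQ0' : Q ≠ ⊥ := by
    intro hbot
    obtain ⟨u, hu, hu0⟩ := (Submodule.ne_bot_iff _).1 hU.2.1
    apply hu0
    apply hnd
    intro v
    have hk : v - q v ∈ LinearMap.ker q := by
      rw [LinearMap.mem_ker, map_sub, hq1 _ (hqU v), sub_self]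
    have h1 : p (v - q v) ∈ Q := ⟨_, hk, rfl⟩
    rw [hbot, Submodule.mem_bot] at h1
    have h2 := hpB (v - q v) u (hUY hu)
    rw [h1, map_zero, LinearMap.zero_apply, map_sub, LinearMap.sub_apply,
      (mem_orth_iff halt).1 (hqU v) u hu, sub_zero] at h2
    rw [alt_antisymm B halt, ← h2, neg_zero]
  obtain ⟨X, hXQ, hX⟩ := exists_irr ρ hQI hQ0'
  rcases irr_dichotomy halt hρ hX hX.1 with hXn | hXi
  · exact ⟨X, hXQ.trans hQY, hX.2.1, good_irr hodd hG halt hnd hρ hX hXn⟩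
  have hXU : ∀ x ∈ X, (∀ u ∈ U, B x u = 0) → x = 0 := fun x hx => hQU x (hXQ hx)
  have hUX : ∀ u ∈ U, (∀ x ∈ X, B u x = 0) → u = 0 := by
    rcases irr_dichotomy halt hρ hU hX.1 with h | h
    · exact h
    · exfalso
      apply hX.2.1
      rw [Submodule.eq_bot_iff]
      intro x hx
      apply hXU x hx
      intro u hu
      rw [alt_antisymm B halt, h u hu x hx, neg_zero]
  refine ⟨U ⊔ X, sup_le hUY (hXQ.trans hQY), ?_, good_hyp halt hρ hU.1 hX.1 hUi hXi hUX hXU⟩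
  intro h
  exact hU.2.1 (le_bot_iff.1 (h ▸ le_sup_left))

theorem good_top [Finite F] [FiniteDimensional F V] [Fintype G]
    (hodd : Odd (Nat.card G)) (hG : ((Nat.card G : ℕ) : F) ≠ 0)
    {B : LinearMap.BilinForm F V} (halt : ∀ v, B v v = 0)
    (hnd : ∀ v, (∀ w, B v w = 0) → v = 0)
    {ρ : G →* Module.End F V} (hρ : ∀ g u v, B (ρ g u) (ρ g v) = B u v) :
    GoodSub B ρ ⊤ := by
  obtain ⟨W, hW, hmax⟩ := exists_maximal_of_wellFoundedGT (GoodSub B ρ)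
    ⟨⊥, by intro g w hw; rw [Submodule.mem_bot] at hw ⊢; rw [hw, map_zero],
      by intro v hv _; exact (Submodule.mem_bot F).1 hv, 0, by simp, by simp, by simp,
      ⊥, le_rfl, by simp, by simp, by simp, by simp, by simp, by simp⟩
  have hc := nd_compl halt hW.2.1
  by_cases h : B.orthogonal W = ⊥
  · have : W = ⊤ := by have := hc.sup_eq_top; rwa [h, sup_bot_eq] at this
    rwa [← this]
  exfalso
  have hYn : NDSub B (B.orthogonal W) := by
    intro v hv hv'
    apply hnd
    intro x
    have : x ∈ W ⊔ B.orthogonal W := by rw [hc.sup_eq_top]; trivial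
    obtain ⟨a, ha, b, hb, rfl⟩ := Submodule.mem_sup.1 this
    rw [map_add, hv' b hb, (mem_orth_iff halt).1 hv a ha, add_zero]
  obtain ⟨W', hW'Y, hW'0, hW'⟩ := exists_good_sub hodd hG halt hnd hρ (hW.1.orth hρ) hYn h
  have hg := good_combine halt hW hW' (fun w hw w' hw' =>
    (LinearMap.BilinForm.mem_orthogonal_iff.1 (hW'Y hw')) w hw)
  have hle : W' ≤ W := le_sup_right.trans (hmax hg le_sup_left)
  apply hW'0
  rw [← le_bot_iff, ← hc.inf_eq_bot]
  exact le_inf hle hW'Y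

end


section
variable {F V : Type*} [Field F] [AddCommGroup V] [Module F V]
  {G : Type*} [Group G]

lemma nilA_sq (B : LinearMap.BilinForm F V) (a : ℕ → V) (h : B (a 0) (a 0) = 0) (v : V) :
    nilA B a (nilA B a v) = 0 := by
  simp [nilA_apply, h]

lemma nilB_sq (B : LinearMap.BilinForm F V) (a : ℕ → V) (k : ℕ)
    (h : ∀ i j, i ≤ k → j ≤ k → B (a i) (a j) = 0) (v : V) :
    nilB B a k (nilB B a k v) = 0 := by
  have hNB : ∀ i ≤ k, nilB B a k (a i) = 0 := by
    intro i hi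
    rw [nilB_apply]
    apply Finset.sum_eq_zero
    intro j hj
    have := Finset.mem_range.1 hj
    rw [h i j hi (by omega), h i (j+1) hi (by omega)]; simp
  rw [nilB_apply B a k v, map_sum]
  apply Finset.sum_eq_zero
  intro j hj
  have := Finset.mem_range.1 hj
  rw [map_add, map_smul, map_smul, hNB j (by omega), hNB (j+1) (by omega)]; simp

lemma nilA_skew (B : LinearMap.BilinForm F V) (halt : ∀ v, B v v = 0) (a : ℕ → V) (u v : V) :
    B (nilA B a u) v = - B u (nilA B a v) := by
  simp only [nilA_apply, map_smul, LinearMap.smul_apply, smul_eq_mul]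
  rw [alt_antisymm B halt (a 0) v]; ring

lemma nilB_skew (B : LinearMap.BilinForm F V) (halt : ∀ v, B v v = 0) (a : ℕ → V) (k : ℕ) (u v : V) :
    B (nilB B a k u) v = - B u (nilB B a k v) := by
  simp only [nilB_apply, map_sum, LinearMap.sum_apply, map_add, map_smul, LinearMap.add_apply,
    LinearMap.smul_apply, smul_eq_mul]
  rw [← Finset.sum_neg_distrib]
  refine Finset.sum_congr rfl fun i _ => ?_
  rw [alt_antisymm B halt (a i) v, alt_antisymm B halt (a (i+1)) v]; ring

lemma core_exists [FiniteDimensional F V] (hdim : 2 < Module.finrank F V)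
    (B : LinearMap.BilinForm F V) (halt : ∀ v, B v v = 0) (ρ : G →* Module.End F V)
    (hgood : GoodSub B ρ ⊤) :
    ∃ e N1 N2 : V →ₗ[F] V, (∀ g v, e (ρ g v) = ρ g (e v)) ∧
      (∀ v, N1 (N1 v) = 0) ∧ (∀ v, N2 (N2 v) = 0) ∧
      (∀ u v, B (N1 u) v = - B u (N1 v)) ∧ (∀ u v, B (N2 u) v = - B u (N2 v)) ∧
      ∀ g : V →ₗ[F] V, (∀ v, g (e v) = e (g v)) →
        (∀ v, g (N1 (e v) - e (N1 v) - N1 (e (N1 v))) =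
          N1 (e (g v)) - e (N1 (g v)) - N1 (e (N1 (g v)))) →
        (∀ v, g (N2 (e v) - e (N2 v) - N2 (e (N2 v))) =
          N2 (e (g v)) - e (N2 (g v)) - N2 (e (N2 (g v)))) →
        ∃ z : F, ∀ v, g v = z • v := by
  obtain ⟨-, -, e, hec, -, -, A, -, hA0, hAs, hA2, hAn, hAt, hAa⟩ := hgood
  obtain ⟨n, a, haA, ho, hne, hspan⟩ := orth_basis (B ∘ₗ e) _ A le_rfl
    (fun u hu v hv => hAs u hu v hv) (fun u hu h => hAn u hu h) hAa
  have hn : 2 ≤ n := by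
    by_contra hlt
    classical
    have hall : (⊤ : Submodule F V) ≤ Submodule.span F (({a 0, e (a 0)} : Finset V) : Set V) := by
      set P := Submodule.span F (({a 0} : Set V)) with hP
      have h1 : A ≤ P := hspan _ (by
        intro i hi
        have : i = 0 := by omega
        subst this
        exact Submodule.subset_span rfl)
      refine hAt.trans (sup_le (h1.trans (Submodule.span_mono (by simp))) ?_)
      refine (Submodule.map_mono h1).trans ?_
      rw [hP, Submodule.map_span]
      exact Submodule.span_mono (by simp)
    have h2 := finrank_span_finset_le_card (R := F) ({a 0, e (a 0)} : Finset V)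
    have h3 : Submodule.span F (({a 0, e (a 0)} : Finset V) : Set V) = ⊤ := top_le_iff.1 hall
    have h4 : Set.finrank F (({a 0, e (a 0)} : Finset V) : Set V) = Module.finrank F V := by
      rw [Set.finrank, h3, finrank_top]
    have h5 := Finset.card_le_two (a := a 0) (b := e (a 0))
    omega
  have hlt : ∀ i, i ≤ n - 1 → i < n := fun i hi => by omega
  have hiso : ∀ i j, i ≤ n - 1 → j ≤ n - 1 → B (a i) (a j) = 0 :=
    fun i j hi hj => hA0 _ (haA i (hlt i hi)) _ (haA j (hlt j hj))
  have hC : ∀ i j, i ≤ n - 1 → j ≤ n - 1 →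
      B (e (a i)) (a j) = if i = j then B (e (a i)) (a i) else 0 := by
    intro i j hi hj
    split_ifs with h
    · rw [h]
    · exact ho i j (hlt i hi) (hlt j hj) h
  refine ⟨e, nilA B a, nilB B a (n-1), hec, nilA_sq B a (hiso 0 0 (by omega) (by omega)),
    nilB_sq B a _ hiso, nilA_skew B halt a, nilB_skew B halt a _, ?_⟩
  intro g hge hg1 hg2
  obtain ⟨z, hz⟩ := final_scalar B a (n-1) (by omega) e g (fun i => B (e (a i)) (a i)) hiso hC
    (fun i j hi hj => by
      rw [hA2 _ (haA i (hlt i hi)) _ (haA j (hlt j hj))]; exact hC i j hi hj)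
    (fun i hi => hne i (hlt i hi))
    (nilA B a ∘ₗ e - e ∘ₗ nilA B a - nilA B a ∘ₗ e ∘ₗ nilA B a)
    (nilB B a (n-1) ∘ₗ e - e ∘ₗ nilB B a (n-1) - nilB B a (n-1) ∘ₗ e ∘ₗ nilB B a (n-1))
    (fun v => rfl) (fun v => rfl) hg1 hg2
  refine ⟨z, ?_⟩
  set P := LinearMap.ker (g - z • LinearMap.id) with hP
  have hmem : ∀ v, v ∈ P ↔ g v = z • v := by
    intro v
    rw [hP, LinearMap.mem_ker, LinearMap.sub_apply, sub_eq_zero]; rfl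
  have h1 : A ≤ P := hspan P (fun i hi => (hmem _).2 (hz i (by omega)))
  have h2 : A.map e ≤ P := by
    rintro _ ⟨v, hv, rfl⟩
    rw [hmem, hge, (hmem v).1 (h1 hv), map_smul]
  intro v
  exact (hmem v).1 ((sup_le h1 h2) (hAt Submodule.mem_top))

end

section

lemma exists_transvec {n : ℕ} {F : Type*} [Field F] (B : LinearMap.BilinForm F (Fin n → F))
    (N : (Fin n → F) →ₗ[F] (Fin n → F)) (hN : ∀ v, N (N v) = 0)
    (hs : ∀ u v, B (N u) v = - B u (N v)) :
    ∃ x : GL (Fin n) F, x ∈ isometryGroup (fun u v => B u v) ∧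
      (∀ v, Matrix.vecMul v (x : Matrix (Fin n) (Fin n) F) = v + N v) ∧
      (∀ v, Matrix.vecMul v ((x⁻¹ : GL (Fin n) F) : Matrix (Fin n) (Fin n) F) = v - N v) := by
  have h1 : (LinearMap.id + N) ∘ₗ (LinearMap.id - N) = LinearMap.id := by
    ext1 v; ext1; simp [hN]
  have h2 : (LinearMap.id - N) ∘ₗ (LinearMap.id + N) = LinearMap.id := by
    ext1 v; ext1; simp [hN]
  let x : GL (Fin n) F := ⟨(LinearMap.toMatrix' (LinearMap.id + N))ᵀ,
    (LinearMap.toMatrix' (LinearMap.id - N))ᵀ,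
    by rw [← Matrix.transpose_mul, ← LinearMap.toMatrix'_comp, h2]; simp,
    by rw [← Matrix.transpose_mul, ← LinearMap.toMatrix'_comp, h1]; simp⟩
  have hx : ∀ v, Matrix.vecMul v (x : Matrix (Fin n) (Fin n) F) = v + N v := by
    intro v
    change Matrix.vecMul v (LinearMap.toMatrix' (LinearMap.id + N))ᵀ = _
    rw [Matrix.vecMul_transpose, LinearMap.toMatrix'_mulVec]; rfl
  refine ⟨x, ?_, hx, ?_⟩
  · intro u v
    rw [hx, hx]
    have : B (N u) (N v) = 0 := by rw [hs, hN]; simp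
    simp only [map_add, LinearMap.add_apply, this, hs u v]
    ring
  · intro v
    change Matrix.vecMul v (LinearMap.toMatrix' (LinearMap.id - N))ᵀ = _
    rw [Matrix.vecMul_transpose, LinearMap.toMatrix'_mulVec]; rfl

lemma conj_comm {n : ℕ} {F : Type*} [Field F]
    (N e : (Fin n → F) →ₗ[F] (Fin n → F)) (hN : ∀ v, N (N v) = 0)
    (x h g : GL (Fin n) F)
    (hx : ∀ v, Matrix.vecMul v (x : Matrix (Fin n) (Fin n) F) = v + N v)
    (hx' : ∀ v, Matrix.vecMul v ((x⁻¹ : GL (Fin n) F) : Matrix (Fin n) (Fin n) F) = v - N v)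
    (hg : g = x⁻¹ * h * x)
    (he : ∀ v, e (Matrix.vecMul v (h : Matrix (Fin n) (Fin n) F)) =
      Matrix.vecMul (e v) (h : Matrix (Fin n) (Fin n) F))
    (heg : ∀ v, e (Matrix.vecMul v (g : Matrix (Fin n) (Fin n) F)) =
      Matrix.vecMul (e v) (g : Matrix (Fin n) (Fin n) F)) (v : Fin n → F) :
    Matrix.vecMul (N (e v) - e (N v) - N (e (N v))) (g : Matrix (Fin n) (Fin n) F) =
      N (e (Matrix.vecMul v (g : Matrix (Fin n) (Fin n) F))) -
      e (N (Matrix.vecMul v (g : Matrix (Fin n) (Fin n) F))) -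
      N (e (N (Matrix.vecMul v (g : Matrix (Fin n) (Fin n) F)))) := by
  -- the map `T = (1 + N) e (1 - N)` commutes with `g`
  have hgv : ∀ w, Matrix.vecMul w (g : Matrix (Fin n) (Fin n) F) =
      Matrix.vecMul (Matrix.vecMul (Matrix.vecMul w
        ((x⁻¹ : GL (Fin n) F) : Matrix (Fin n) (Fin n) F)) (h : Matrix (Fin n) (Fin n) F))
        (x : Matrix (Fin n) (Fin n) F) := by
    intro w; rw [hg]; simp [Matrix.vecMul_vecMul, Matrix.mul_assoc]
  have hT : ∀ w, N (e w) - e (N w) - N (e (N w)) = (e (w - N w) + N (e (w - N w))) - e w := by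
    intro w; simp only [map_sub]; abel
  have h1 : ∀ w : Fin n → F, w + N w - N (w + N w) = w := by
    intro w; rw [map_add, hN]; abel
  have h2 : ∀ w : Fin n → F, w - N w + N (w - N w) = w := by
    intro w; rw [map_sub, hN]; abel
  have hL : Matrix.vecMul (e (v - N v) + N (e (v - N v))) (g : Matrix (Fin n) (Fin n) F) =
      e (Matrix.vecMul v (g : Matrix (Fin n) (Fin n) F) - N (Matrix.vecMul v (g : Matrix (Fin n) (Fin n) F)))
      + N (e (Matrix.vecMul v (g : Matrix (Fin n) (Fin n) F) - N (Matrix.vecMul v (g : Matrix (Fin n) (Fin n) F)))) := by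
    rw [hgv v, hx', hx, h1, he, hgv, hx', h1, hx]
  rw [hT, hT, Matrix.sub_vecMul, hL, heg]

end

section

lemma exists_rep {n : ℕ} {F : Type*} [Field F]
    (B : LinearMap.BilinForm F (Fin n → F)) (u0 v0 : Fin n → F) (h0 : B u0 v0 ≠ 0)
    (H : Subgroup (GL (Fin n) F)) (hH : H ≤ similitudeGroup (fun u v => B u v))
    [Fintype H] (hodd : Odd (Nat.card H)) :
    ∃ ρ : H →* Module.End F (Fin n → F), (∀ g u v, B (ρ g u) (ρ g v) = B u v) ∧
      ∀ h : H, ∃ c : F, c ≠ 0 ∧ ∀ v, ρ h v = c • Matrix.vecMul v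
        (((h⁻¹ : H) : GL (Fin n) F) : Matrix (Fin n) (Fin n) F) := by
  have hex : ∀ h : H, ∃ c : Fˣ, ∀ u v : Fin n → F,
    B (Matrix.vecMul u ((h : GL (Fin n) F) : Matrix (Fin n) (Fin n) F))
      (Matrix.vecMul v ((h : GL (Fin n) F) : Matrix (Fin n) (Fin n) F)) = (c : F) * B u v :=
    fun h => hH h.2
  choose lam hlam using hex
  have hl : ∀ a b, lam (a * b) = lam a * lam b := by
    intro a b
    apply Units.ext
    apply mul_right_cancel₀ h0
    rw [← hlam]
    simp only [Subgroup.coe_mul, Units.val_mul, ← Matrix.vecMul_vecMul, hlam]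
    ring
  let L : H →* Fˣ := MonoidHom.mk' lam hl
  have hL : ∀ h, L h = lam h := fun _ => rfl
  obtain ⟨k, hk⟩ := hodd
  have hLN : ∀ h, L h ^ (k + 1) * L h ^ (k + 1) = L h := by
    intro h
    have : h ^ (2 * k + 1) = 1 := by rw [← hk]; exact pow_card_eq_one'
    have h2 : L h ^ (2 * k + 1) = 1 := by rw [← map_pow, this, map_one]
    calc _ = L h ^ (2 * k + 1) * L h := by
          rw [← pow_add, ← pow_succ]; congr 1; omega
      _ = _ := by rw [h2, one_mul]
  let ρ : H →* Module.End F (Fin n → F) :=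
    { toFun := fun h => ((L h ^ (k + 1) : Fˣ) : F) • (((h⁻¹ : H) : GL (Fin n) F) : Matrix (Fin n) (Fin n) F).vecMulLinear
      map_one' := by ext1 v; ext1; simp
      map_mul' := by
        intro a b
        refine LinearMap.ext fun v => ?_
        simp only [Module.End.mul_apply, LinearMap.smul_apply, Matrix.vecMulLinear_apply,
          Matrix.smul_vecMul, Matrix.vecMul_vecMul, _root_.mul_inv_rev, Subgroup.coe_mul,
          Units.val_mul, map_mul, mul_pow, smul_smul] }
  have hρ : ∀ h v, ρ h v = ((L h ^ (k + 1) : Fˣ) : F) • Matrix.vecMul v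
      (((h⁻¹ : H) : GL (Fin n) F) : Matrix (Fin n) (Fin n) F) := fun _ _ => rfl
  refine ⟨ρ, ?_, fun h => ⟨_, Units.ne_zero _, hρ h⟩⟩
  intro g u v
  rw [hρ, hρ]
  simp only [map_smul, LinearMap.smul_apply, smul_eq_mul, hlam]
  have h3 : ((L g ^ (k + 1) : Fˣ) : F) * (((L g ^ (k + 1) : Fˣ) : F) * ((lam g⁻¹ : Fˣ) : F)) = 1 := by
    rw [← mul_assoc, ← Units.val_mul, hLN, ← Units.val_mul, hL, ← hl]
    simp [← hL]
  linear_combination (B u v) * h3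

end

theorem stmt3 (p f q m : ℕ) (hp : p.Prime) (hf : 1 ≤ f) (hq : q = p ^ f)
    (F : Type) [Field F] [Fintype F] (hcard : Fintype.card F = q)
    (hm : 4 ≤ 2 * m)
    (B : LinearMap.BilinForm F (Fin (2 * m) → F))
    (halt : ∀ v : Fin (2 * m) → F, B v v = 0) (hnd : ∀ v : Fin (2 * m) → F, (∀ w : Fin (2 * m) → F, B v w = 0) → v = 0)
    (hnonsolv : ¬ IsSolvable ↥(similitudeGroup (fun u v => B u v)))
    (π : Set ℕ) (hπ : ∀ r ∈ π, r.Prime) (h2pi : 2 ∉ π) (hppi : p ∉ π)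
    (htwo : 2 ≤ (π ∩ {r : ℕ | r.Prime ∧ r ∣ Nat.card (similitudeGroup (fun u v => B u v))}).ncard)
    (H : Subgroup (GL (Fin (2 * m)) F))
    (hH : IsHallSubgroupIn π (similitudeGroup (fun u v => B u v)) H)
    :
    ∃ x y z : GL (Fin (2 * m)) F,
      x ∈ (H : Set (GL (Fin (2 * m)) F)) * (isometryGroup (fun u v => B u v) : Set (GL (Fin (2 * m)) F)) ∧
      y ∈ (H : Set (GL (Fin (2 * m)) F)) * (isometryGroup (fun u v => B u v) : Set (GL (Fin (2 * m)) F)) ∧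
      z ∈ (H : Set (GL (Fin (2 * m)) F)) * (isometryGroup (fun u v => B u v) : Set (GL (Fin (2 * m)) F)) ∧
    ∀ g ∈ H ⊓ conjBy H x ⊓ conjBy H y ⊓ conjBy H z,
      ∃ c : F, (g : Matrix (Fin (2 * m)) (Fin (2 * m)) F) = c • (1 : Matrix (Fin (2 * m)) (Fin (2 * m)) F) := by
  have hodd : Odd (Nat.card H) := by
    rw [← Nat.not_even_iff_odd, even_iff_two_dvd]
    exact fun h => h2pi (hH.2.1 2 Nat.prime_two h)
  have hpF : CharP F p := by
    have : Fact p.Prime := ⟨hp⟩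
    exact charP_of_card_eq_prime_pow (f := f) (by rw [hcard, hq])
  have hN : ((Nat.card H : ℕ) : F) ≠ 0 := by
    intro h
    exact hppi (hH.2.1 p hp ((CharP.cast_eq_zero_iff F p _).1 h))
  have : Fintype H := Fintype.ofFinite H
  obtain ⟨u0, v0, h0⟩ : ∃ u0 v0, B u0 v0 ≠ 0 := by
    by_contra hcon
    push Not at hcon
    have h1 := congrFun (hnd (fun _ => 1) (fun w => hcon _ w)) ⟨0, by omega⟩
    exact one_ne_zero h1
  obtain ⟨ρ, hρ, hρv⟩ := exists_rep B u0 v0 h0 H hH.1 hodd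
  have hgood := good_top hodd hN halt hnd hρ
  obtain ⟨e, N1, N2, hec, hN1, hN2, hs1, hs2, hfin⟩ :=
    core_exists (by rw [Module.finrank_fin_fun]; omega) B halt ρ hgood
  have hcomm : ∀ h ∈ H, ∀ v, e (Matrix.vecMul v (h : Matrix (Fin (2 * m)) (Fin (2 * m)) F)) =
      Matrix.vecMul (e v) (h : Matrix (Fin (2 * m)) (Fin (2 * m)) F) := by
    intro h hh v
    obtain ⟨c, hc, hcv⟩ := hρv ⟨h⁻¹, H.inv_mem hh⟩
    have h1 := hec ⟨h⁻¹, H.inv_mem hh⟩ v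
    rw [hcv, hcv, map_smul] at h1
    have h2 := smul_right_injective _ hc h1
    simpa using h2
  obtain ⟨x, hxI, hx, hx'⟩ := exists_transvec B N1 hN1 hs1
  obtain ⟨y, hyI, hy, hy'⟩ := exists_transvec B N2 hN2 hs2
  refine ⟨x, y, 1, ⟨1, H.one_mem, x, hxI, one_mul x⟩, ⟨1, H.one_mem, y, hyI, one_mul y⟩,
    ⟨1, H.one_mem, 1, Subgroup.one_mem _, one_mul 1⟩, ?_⟩
  rintro g ⟨⟨⟨hgH, hgx⟩, hgy⟩, -⟩
  obtain ⟨a, ha, hax⟩ := hgx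
  obtain ⟨b, hb, hby⟩ := hgy
  have hga : g = x⁻¹ * a * x := by rw [← hax]; simp [MulAut.conj_apply]
  have hgb : g = y⁻¹ * b * y := by rw [← hby]; simp [MulAut.conj_apply]
  obtain ⟨z, hz⟩ := hfin ((g : Matrix (Fin (2 * m)) (Fin (2 * m)) F).vecMulLinear)
    (fun v => (hcomm g hgH v).symm)
    (conj_comm N1 e hN1 x a g hx hx' hga (hcomm a ha) (hcomm g hgH))
    (conj_comm N2 e hN2 y b g hy hy' hgb (hcomm b hb) (hcomm g hgH))
  refine ⟨z, ?_⟩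
  apply Matrix.ext_of_single_vecMul
  intro i
  have h1 := hz (Pi.single i 1)
  rw [Matrix.vecMulLinear_apply] at h1
  rw [h1, Matrix.vecMul_smul, Matrix.vecMul_one]
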